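/- arXiv:1011.0795 — 2 statements merged into one kernel-verified Lean document; each statement's English description precedes it below -/
import Mathlib

section
/- The number of standard Young tableaux of shifted staircase shape (n, n-1, ..., 1) with the single box in the upper right corner removed equals g_n * C_n * C_{n-2} / (2 * C_{2n-3}), where g_n = binom(n+1,2)! / prod_{0 <= i < j <= n} (i+j) and C_m is the m-th Catalan number. -/
open Finset
open scoped Classical

noncomputable section

/-- Cells of the skew Young diagram `lam / mu` (0-indexed: cell `(i,j)` with `mu i ≤ j < lam i`). -/
def skewCells (lam mu : ℕ →₀ ℕ) : Finset (ℕ × ℕ) :=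
  lam.support.biUnion fun i =>
    ((Finset.range (lam i)).filter fun j => mu i ≤ j).image fun j => (i, j)

/-- A finitely supported function is a partition if it is antitone. -/
def IsPartition (l : ℕ →₀ ℕ) : Prop := ∀ i j : ℕ, i ≤ j → l j ≤ l i

/-- The type of all integer partitions. -/
def Ptn : Type := {l : ℕ →₀ ℕ // IsPartition l}

/-- Semistandard condition: rows weakly increase, columns strictly increase. -/
def IsSSYT (lam mu : ℕ →₀ ℕ) (n : ℕ) (T : skewCells lam mu → Fin n) : Prop :=
  ∀ c c' : skewCells lam mu,
    ((c : ℕ × ℕ).1 = (c' : ℕ × ℕ).1 → (c : ℕ × ℕ).2 ≤ (c' : ℕ × ℕ).2 → T c ≤ T c') ∧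
    ((c : ℕ × ℕ).2 = (c' : ℕ × ℕ).2 → (c : ℕ × ℕ).1 < (c' : ℕ × ℕ).1 → T c < T c')

/-- The (skew) Schur polynomial `s_{lam/mu}` in `n` variables, evaluated at `u`. -/
def skewSchur {R : Type*} [CommSemiring R] (n : ℕ) (lam mu : ℕ →₀ ℕ) (u : Fin n → R) : R :=
  ∑ T ∈ Finset.univ.filter (IsSSYT lam mu n), ∏ c : skewCells lam mu, u (T c)

/-- The number of standard Young tableaux of an arbitrary (truncated) diagram `D`:
bijective fillings increasing along rows and down columns. -/
def sytCard (D : Finset (ℕ × ℕ)) : ℕ :=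
  (Finset.univ.filter fun T : D → Fin D.card => Function.Bijective T ∧
    ∀ c c' : D, ((c : ℕ × ℕ).1 = (c' : ℕ × ℕ).1 → (c : ℕ × ℕ).2 < (c' : ℕ × ℕ).2 → T c < T c') ∧
      ((c : ℕ × ℕ).2 = (c' : ℕ × ℕ).2 → (c : ℕ × ℕ).1 < (c' : ℕ × ℕ).1 → T c < T c')).card

/-- Complete homogeneous symmetric polynomial of degree `s` in `p` variables, evaluated at `u`. -/
def hpoly {R : Type*} [CommSemiring R] (p s : ℕ) (u : Fin p → R) : R :=
  ∑ f ∈ Finset.univ.filter (fun f : Fin s → Fin p => Monotone f), ∏ t, u (f t)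

/-- The rectangular partition `(p^k)`. -/
def rectPtn (k p : ℕ) : ℕ →₀ ℕ :=
  Finsupp.onFinset (Finset.range k) (fun i => if i < k then p else 0)
    (fun a ha => by
      simp only [Finset.mem_range]
      by_contra h
      simp [h] at ha)

/-- Plane partition of shape `D`: supported on `D`, weakly decreasing along rows and columns. -/
def IsPPofShape (D : Finset (ℕ × ℕ)) (T : ℕ × ℕ → ℕ) : Prop :=
  (∀ c, c ∉ D → T c = 0) ∧ ∀ c ∈ D, ∀ c' ∈ D,
    (c.1 = c'.1 → c.2 ≤ c'.2 → T c' ≤ T c) ∧ (c.2 = c'.2 → c.1 ≤ c'.1 → T c' ≤ T c)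


/-- The basic covering relation: later in the same row or lower in the same column. -/
def cellLt (c c' : ℕ × ℕ) : Prop :=
  (c.1 = c'.1 ∧ c.2 < c'.2) ∨ (c.2 = c'.2 ∧ c.1 < c'.1)

/-- Standard fillings with values in `Fin k`. -/
def IsStd (D : Finset (ℕ × ℕ)) (k : ℕ) (T : D → Fin k) : Prop :=
  Function.Bijective T ∧ ∀ c c' : D, cellLt c c' → T c < T c'

def cnt (D : Finset (ℕ × ℕ)) (k : ℕ) : ℕ := (univ.filter (IsStd D k)).card

theorem sytCard_eq_cnt (D : Finset (ℕ × ℕ)) : sytCard D = cnt D D.card := by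
  unfold sytCard cnt IsStd cellLt
  congr 1
  ext T
  simp only [Finset.mem_filter, Finset.mem_univ, true_and]
  apply and_congr Iff.rfl
  constructor
  · intro h c c' hc
    rcases hc with hc | hc
    · exact (h c c').1 hc.1 hc.2
    · exact (h c c').2 hc.1 hc.2
  · intro h c c'
    exact ⟨fun h1 h2 => h c c' (Or.inl ⟨h1, h2⟩), fun h1 h2 => h c c' (Or.inr ⟨h1, h2⟩)⟩

def maxCells (D : Finset (ℕ × ℕ)) : Finset (ℕ × ℕ) := D.filter fun c => ∀ c' ∈ D, ¬ cellLt c c'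

theorem cellLt_irrefl (c : ℕ × ℕ) : ¬ cellLt c c := by unfold cellLt; omega

/-- extension of a filling of `D.erase c` by the largest value at `c`. -/
def extT (D : Finset (ℕ × ℕ)) (k : ℕ) (c : ℕ × ℕ) (T : ↥(D.erase c) → Fin k) :
    D → Fin (k + 1) :=
  fun x => if h : (x : ℕ × ℕ) = c then Fin.last k
    else (T ⟨x, Finset.mem_erase.2 ⟨h, x.2⟩⟩).castSucc

theorem cnt_fiber (D : Finset (ℕ × ℕ)) (k : ℕ) (c : ℕ × ℕ) (hc : c ∈ maxCells D) (hcD : c ∈ D) :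
    (univ.filter fun T => IsStd D (k+1) T ∧ T ⟨c, hcD⟩ = Fin.last k).card = cnt (D.erase c) k := by
  symm
  unfold cnt
  have hmax := (Finset.mem_filter.1 hc).2
  refine Finset.card_bij (fun T _ => extT D k c T) ?_ ?_ ?_
  · intro T hT
    obtain ⟨hb, hm⟩ := (Finset.mem_filter.1 hT).2
    simp only [Finset.mem_filter, Finset.mem_univ, true_and]
    refine ⟨⟨⟨?_, ?_⟩, ?_⟩, by simp [extT]⟩
    · intro x y hxy
      simp only [extT] at hxy
      split_ifs at hxy with h1 h2 h2
      · exact Subtype.ext (h1.trans h2.symm)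
      · exact absurd hxy.symm (Fin.castSucc_lt_last _).ne
      · exact absurd hxy (Fin.castSucc_lt_last _).ne
      · have := hb.1 (Fin.castSucc_injective _ hxy)
        have h9 := Subtype.ext_iff.1 this
        exact Subtype.ext h9
    · intro y
      induction y using Fin.lastCases with
      | last => exact ⟨⟨c, hcD⟩, by simp [extT]⟩
      | cast y =>
        obtain ⟨x, hx⟩ := hb.2 y
        refine ⟨⟨x, Finset.mem_of_mem_erase x.2⟩, ?_⟩
        have : (x : ℕ × ℕ) ≠ c := Finset.ne_of_mem_erase x.2
        simp [extT, this, hx]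
    · intro x y hxy
      simp only [extT]
      split_ifs with h1 h2 h2
      · exfalso; rw [h1] at hxy; exact hmax _ y.2 hxy
      · exfalso; rw [h1] at hxy; exact hmax _ y.2 hxy
      · exact Fin.castSucc_lt_last _
      · exact Fin.castSucc_lt_castSucc_iff.2 (hm _ _ hxy)
  · intro T hT T' hT' h
    funext x
    have := congrFun h ⟨x, Finset.mem_of_mem_erase x.2⟩
    have hx : (x : ℕ × ℕ) ≠ c := Finset.ne_of_mem_erase x.2
    simpa [extT, hx] using this
  · intro T hT
    obtain ⟨⟨hb, hm⟩, hl⟩ := (Finset.mem_filter.1 hT).2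
    have hne : ∀ x : (D.erase c : Finset (ℕ × ℕ)),
        T ⟨x, Finset.mem_of_mem_erase x.2⟩ ≠ Fin.last k := by
      intro x hx
      rw [← hl] at hx
      exact Finset.ne_of_mem_erase x.2 (Subtype.ext_iff.1 (hb.1 hx))
    refine ⟨fun x => (T ⟨x, Finset.mem_of_mem_erase x.2⟩).castPred (hne x), ?_, ?_⟩
    · simp only [Finset.mem_filter, Finset.mem_univ, true_and]
      refine ⟨⟨?_, ?_⟩, ?_⟩
      · intro x y hxy
        have := hb.1 (Fin.castPred_inj.1 hxy)
        have h9 := Subtype.ext_iff.1 this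
        exact Subtype.ext h9
      · intro y
        obtain ⟨x, hx⟩ := hb.2 y.castSucc
        have hxc : (x : ℕ × ℕ) ≠ c := by
          intro h
          have : x = ⟨c, hcD⟩ := Subtype.ext h
          rw [this, hl] at hx
          exact absurd hx.symm (Fin.castSucc_lt_last _).ne
        refine ⟨⟨x, Finset.mem_erase.2 ⟨hxc, x.2⟩⟩, ?_⟩
        simp [hx]
      · intro x y hxy
        exact Fin.castPred_lt_castPred_iff.2 (hm _ _ hxy)
    · funext x
      by_cases h : (x : ℕ × ℕ) = c
      · have : x = ⟨c, hcD⟩ := Subtype.ext h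
        rw [this, hl]; simp [extT]
      · simp [extT, h]

theorem cnt_succ (D : Finset (ℕ × ℕ)) (k : ℕ) :
    cnt D (k + 1) = ∑ c ∈ maxCells D, cnt (D.erase c) k := by
  have h1 : univ.filter (IsStd D (k+1)) = (maxCells D).attach.biUnion fun c =>
      univ.filter fun T => IsStd D (k+1) T ∧
        T ⟨c.1, (Finset.mem_filter.1 c.2).1⟩ = Fin.last k := by
    ext T
    simp only [Finset.mem_filter, Finset.mem_univ, true_and, Finset.mem_biUnion,
      Finset.mem_attach]
    constructor
    · intro hT
      obtain ⟨x, hx⟩ := hT.1.2 (Fin.last k)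
      refine ⟨⟨x, Finset.mem_filter.2 ⟨x.2, ?_⟩⟩, hT, hx⟩
      intro c' hc' hlt
      have := hT.2 x ⟨c', hc'⟩ hlt
      rw [hx] at this
      exact absurd this (not_lt.2 (Fin.le_last _))
    · rintro ⟨c, hT, _⟩
      exact hT
  conv_lhs => unfold cnt
  rw [h1, Finset.card_biUnion, ← Finset.sum_attach (maxCells D)]
  · apply Finset.sum_congr rfl
    intro c _
    exact cnt_fiber D k c c.2 _
  · intro c _ c' _ hne
    rw [Function.onFun, Finset.disjoint_left]
    intro T hT hT'
    have h2 := (Finset.mem_filter.1 hT).2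
    have h3 := (Finset.mem_filter.1 hT').2
    have := h2.1.1.1 (h2.2.trans h3.2.symm)
    apply hne
    have h4 := Subtype.ext_iff.1 this
    exact Subtype.ext h4

theorem sytCard_empty : sytCard ∅ = 1 := by
  rw [sytCard_eq_cnt]
  unfold cnt
  rw [Finset.card_eq_one]
  refine ⟨fun x => absurd x.2 (Finset.notMem_empty _), ?_⟩
  ext T
  simp only [Finset.mem_filter, Finset.mem_univ, true_and, Finset.mem_singleton]
  constructor
  · intro _
    funext x
    exact absurd x.2 (Finset.notMem_empty _)
  · intro _
    refine ⟨⟨fun x => absurd x.2 (Finset.notMem_empty _), fun y => ?_⟩,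
      fun x => absurd x.2 (Finset.notMem_empty _)⟩
    exact absurd y.2 (by simp)

theorem sytCard_rec (D : Finset (ℕ × ℕ)) (hD : D.Nonempty) :
    sytCard D = ∑ c ∈ maxCells D, sytCard (D.erase c) := by
  obtain ⟨k, hk⟩ : ∃ k, D.card = k + 1 := ⟨D.card - 1, by have := hD.card_pos; omega⟩
  rw [sytCard_eq_cnt, hk, cnt_succ]
  apply Finset.sum_congr rfl
  intro c hc
  rw [sytCard_eq_cnt, Finset.card_erase_of_mem (Finset.mem_filter.1 hc).1, hk]
  rfl

theorem lagrange_aux (S : Finset ℕ) (y z : ℕ → ℚ) (hy : Set.InjOn y S) (hS : S.Nonempty) :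
    ∑ i ∈ S, (∏ j ∈ S, (y i - z j)) / ∏ j ∈ S.erase i, (y i - y j) =
      ∑ i ∈ S, y i - ∑ i ∈ S, z i := by
  open Polynomial in
  set Q : ℚ[X] := ∏ j ∈ S, (X - C (z j)) - ∏ j ∈ S, (X - C (y j)) with hQ
  have hdeg : Q.degree < S.card := by
    have h1 : (∏ j ∈ S, (X - C (z j)) : ℚ[X]).degree = S.card := by
      rw [Polynomial.degree_prod]; simp
    have h2 : (∏ j ∈ S, (X - C (y j)) : ℚ[X]).degree = S.card := by
      rw [Polynomial.degree_prod]; simp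
    rw [← h1]
    apply Polynomial.degree_sub_lt_left (h1.trans h2.symm)
    · exact (Polynomial.monic_prod_of_monic _ _ fun i _ => Polynomial.monic_X_sub_C _).ne_zero
    · rw [(Polynomial.monic_prod_of_monic _ _ fun i _ => Polynomial.monic_X_sub_C _).leadingCoeff,
        (Polynomial.monic_prod_of_monic _ _ fun i _ => Polynomial.monic_X_sub_C _).leadingCoeff]
  have h := Lagrange.coeff_eq_sum hy hdeg
  rw [hQ, Polynomial.coeff_sub, Polynomial.prod_X_sub_C_coeff_card_pred _ _ hS.card_pos,
    Polynomial.prod_X_sub_C_coeff_card_pred _ _ hS.card_pos] at h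
  have h3 : ∑ i ∈ S, y i - ∑ i ∈ S, z i = -∑ i ∈ S, z i - -∑ i ∈ S, y i := by ring
  rw [h3, h]
  apply Finset.sum_congr rfl
  intro i hi
  congr 1
  rw [Polynomial.eval_sub, Polynomial.eval_prod, Polynomial.eval_prod,
    Finset.prod_eq_zero hi (f := fun j => Polynomial.eval (y i) (X - C (y j))) (by simp)]
  simp

theorem key_identity (S : Finset ℕ) (h0 : 0 ∉ S) :
    ∑ s ∈ S, (s : ℚ) * ∏ j ∈ S.erase s,
      (((s : ℚ) - 1 - j) * (s + j)) / ((s - 1 + j) * (s - j)) = ∑ s ∈ S, (s : ℚ) := by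
  rcases S.eq_empty_or_nonempty with rfl | hS
  · simp
  have hpos : ∀ s ∈ S, 1 ≤ s := fun s hs => Nat.one_le_iff_ne_zero.2 (fun h => h0 (h ▸ hs))
  have h := lagrange_aux S (fun s => (s : ℚ) * (s - 1)) (fun s => (s : ℚ) * (s + 1)) ?_ hS
  · have e1 : ∑ i ∈ S, (i : ℚ) * (i - 1) - ∑ i ∈ S, (i : ℚ) * (i + 1) = -2 * ∑ s ∈ S, (s : ℚ) := by
      rw [← Finset.sum_sub_distrib, Finset.mul_sum]
      apply Finset.sum_congr rfl; intros; ring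
    rw [e1] at h
    have : -2 * ∑ s ∈ S, (s : ℚ) * ∏ j ∈ S.erase s,
      (((s : ℚ) - 1 - j) * (s + j)) / ((s - 1 + j) * (s - j)) = -2 * ∑ s ∈ S, (s : ℚ) := by
      rw [← h, Finset.mul_sum]
      apply Finset.sum_congr rfl
      intro s hs
      rw [← Finset.mul_prod_erase _ _ hs, Finset.prod_div_distrib]
      have e2 : ∏ j ∈ S.erase s, (((s : ℚ) - 1 - j) * (s + j)) =
          ∏ j ∈ S.erase s, ((s : ℚ) * (s - 1) - j * (j + 1)) :=
        Finset.prod_congr rfl fun _ _ => by ring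
      have e3 : ∏ j ∈ S.erase s, (((s : ℚ) - 1 + j) * (s - j)) =
          ∏ j ∈ S.erase s, ((s : ℚ) * (s - 1) - j * (j - 1)) :=
        Finset.prod_congr rfl fun _ _ => by ring
      rw [e2, e3]; ring
    linarith
  · intro a ha b hb hab
    have ha1 : (1 : ℚ) ≤ a := by exact_mod_cast hpos a ha
    have hb1 : (1 : ℚ) ≤ b := by exact_mod_cast hpos b hb
    have : ((a : ℚ) - b) * (a + b - 1) = 0 := by linear_combination hab
    rcases mul_eq_zero.1 this with h | h
    · exact_mod_cast sub_eq_zero.1 h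
    · exfalso; linarith

/-- pair factor -/
def pf (i j : ℕ) : ℚ := |(i : ℚ) - j| / (i + j)

theorem pf_comm (i j : ℕ) : pf i j = pf j i := by
  unfold pf; rw [abs_sub_comm, add_comm]

/-- Schur's formula for the number of shifted standard tableaux. -/
def FF (S : Finset ℕ) : ℚ :=
  ((∑ i ∈ S, i).factorial : ℚ) * (∏ i ∈ S, (1 / (i.factorial : ℚ))) *
    ∏ i ∈ S, ∏ j ∈ S, if j < i then pf i j else 1

theorem FF_empty : FF ∅ = 1 := by simp [FF]

theorem FF_insert (a : ℕ) (T : Finset ℕ) (ha : a ∉ T) :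
    FF (insert a T) = ((a + ∑ i ∈ T, i).factorial : ℚ) / (∑ i ∈ T, i).factorial / a.factorial *
      (∏ j ∈ T, pf a j) * FF T := by
  unfold FF
  have h1 : (∏ i ∈ insert a T, ∏ j ∈ insert a T, if j < i then pf i j else 1) =
      (∏ j ∈ T, pf a j) * ∏ i ∈ T, ∏ j ∈ T, if j < i then pf i j else 1 := by
    rw [Finset.prod_insert ha, Finset.prod_insert ha]
    simp only [lt_irrefl, if_false, one_mul]
    rw [Finset.prod_congr rfl (fun i _ => Finset.prod_insert ha), Finset.prod_mul_distrib,
      ← mul_assoc, ← Finset.prod_mul_distrib]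
    congr 1
    apply Finset.prod_congr rfl
    intro j hj
    have hne : j ≠ a := fun h => ha (h ▸ hj)
    rcases lt_or_gt_of_ne hne with h | h
    · simp [h, h.le, not_lt.2 h.le]
    · simp [h, h.le, not_lt.2 h.le, pf_comm]
  rw [h1, Finset.sum_insert ha, Finset.prod_insert ha]
  have : ((∑ i ∈ T, i).factorial : ℚ) ≠ 0 := by positivity
  field_simp

/-- the move `s ↦ s-1`, where a zero part is dropped -/
def dn (s : ℕ) (S : Finset ℕ) : Finset ℕ :=
  if s = 1 then S.erase s else insert (s - 1) (S.erase s)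

def mv (S : Finset ℕ) : Finset ℕ := S.filter fun s => s - 1 ∉ S

theorem FF_dn (S : Finset ℕ) (h0 : 0 ∉ S) (s : ℕ) (hs : s ∈ S) (hs1 : s - 1 ∉ S) :
    FF (dn s S) * (∑ i ∈ S, (i : ℚ)) = FF S * ((s : ℚ) * ∏ j ∈ S.erase s,
      (((s : ℚ) - 1 - j) * (s + j)) / ((s - 1 + j) * (s - j))) := by
  obtain ⟨a, rfl⟩ : ∃ a, s = a + 1 :=
    ⟨s - 1, by have : s ≠ 0 := fun h => h0 (h ▸ hs)
               omega⟩
  simp only [Nat.add_sub_cancel] at hs1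
  set T := S.erase (a + 1) with hT
  have hST : S = insert (a + 1) T := (Finset.insert_erase hs).symm
  have haT : a ∉ T := fun h => hs1 (Finset.mem_of_mem_erase h)
  have hsT : a + 1 ∉ T := Finset.notMem_erase _ _
  have hpos : ∀ j ∈ T, 1 ≤ j := fun j hj => Nat.one_le_iff_ne_zero.2
    (fun h => h0 (h ▸ Finset.mem_of_mem_erase hj))
  have e1 : FF (dn (a + 1) S) = ((a + ∑ i ∈ T, i).factorial : ℚ) / (∑ i ∈ T, i).factorial /
      a.factorial * (∏ j ∈ T, pf a j) * FF T := by
    unfold dn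
    by_cases h : a = 0
    · subst h
      simp only [zero_add, if_true]
      have h1 : ∏ j ∈ T, pf 0 j = 1 := by
        apply Finset.prod_eq_one
        intro j hj
        have : (0 : ℚ) < j := by exact_mod_cast hpos j hj
        simp [pf, this.ne']
      have : ((∑ i ∈ T, i).factorial : ℚ) ≠ 0 := by positivity
      rw [h1, hT]; field_simp; simp
    · rw [if_neg (by omega), ← hT, Nat.add_sub_cancel, FF_insert _ _ haT]
  have e2 : ∑ i ∈ S, (i : ℚ) = ((a + 1 + ∑ i ∈ T, i : ℕ) : ℚ) := by
    rw [hST, Finset.sum_insert hsT]; push_cast; ring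
  have e3 : ∏ j ∈ T, pf a j = (∏ j ∈ T, pf (a + 1) j) * ∏ j ∈ T,
      (((a + 1 : ℕ) : ℚ) - 1 - j) * ((a + 1 : ℕ) + j) /
        (((a + 1 : ℕ) - 1 + j) * ((a + 1 : ℕ) - j)) := by
    rw [← Finset.prod_mul_distrib]
    apply Finset.prod_congr rfl
    intro j hj
    have hj1 : (1 : ℚ) ≤ j := by exact_mod_cast hpos j hj
    have ha0 : (0 : ℚ) ≤ a := by positivity
    have hne1 : j ≠ a := fun h => haT (h ▸ hj)
    have hne2 : j ≠ a + 1 := fun h => hsT (h ▸ hj)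
    unfold pf
    push_cast
    rcases lt_or_gt_of_ne hne1 with h | h
    · have h' : (j : ℚ) < a := by exact_mod_cast h
      rw [abs_of_pos (by linarith), abs_of_pos (by linarith)]
      have : (a : ℚ) + 1 - j ≠ 0 := by linarith
      have : (a : ℚ) + j ≠ 0 := by linarith
      have : (a : ℚ) + 1 + j ≠ 0 := by linarith
      have : (a : ℚ) + 1 - 1 + j ≠ 0 := by linarith
      field_simp
      ring
    · have h' : (a : ℚ) + 1 < j := by
        have : a + 1 < j := by omega
        exact_mod_cast this
      rw [abs_of_neg (by linarith), abs_of_neg (by linarith)]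
      have : (a : ℚ) + 1 - j ≠ 0 := by linarith
      have : (a : ℚ) + j ≠ 0 := by linarith
      have : (a : ℚ) + 1 + j ≠ 0 := by linarith
      have : (a : ℚ) + 1 - 1 + j ≠ 0 := by linarith
      field_simp
      ring
  have e4 : FF S = _ := (congrArg FF hST).trans (FF_insert _ _ hsT)
  rw [e1, e4, e2, e3]
  have e5 : a + 1 + ∑ i ∈ T, i = (a + ∑ i ∈ T, i) + 1 := by ring
  rw [e5, Nat.factorial_succ, Nat.factorial_succ]
  have : ((∑ i ∈ T, i).factorial : ℚ) ≠ 0 := by positivity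
  have : ((a).factorial : ℚ) ≠ 0 := by positivity
  have : ((a : ℚ) + 1) ≠ 0 := by positivity
  push_cast
  field_simp

theorem FF_rec (S : Finset ℕ) (h0 : 0 ∉ S) (hS : S.Nonempty) :
    FF S = ∑ s ∈ mv S, FF (dn s S) := by
  have hpos : (0 : ℚ) < ∑ i ∈ S, (i : ℚ) := by
    apply Finset.sum_pos _ hS
    intro i hi
    have : i ≠ 0 := fun h => h0 (h ▸ hi)
    positivity
  have h : (∑ s ∈ mv S, FF (dn s S)) * (∑ i ∈ S, (i : ℚ)) = FF S * (∑ i ∈ S, (i : ℚ)) := by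
    conv_rhs => rw [← key_identity S h0, Finset.mul_sum, ← Finset.sum_filter_add_sum_filter_not S
      (fun s => s - 1 ∉ S)]
    rw [Finset.sum_mul]
    rw [Finset.sum_eq_zero (s := S.filter fun s => ¬ (s - 1 ∉ S)), add_zero]
    · apply Finset.sum_congr rfl
      intro s hs
      have := Finset.mem_filter.1 hs
      exact FF_dn S h0 s this.1 this.2
    · intro s hs
      have hs' := Finset.mem_filter.1 hs
      have h1 := not_not.1 hs'.2
      have h2 : s ≠ 0 := fun h => h0 (h ▸ hs'.1)
      rw [Finset.prod_eq_zero (i := s - 1)]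
      · ring
      · exact Finset.mem_erase.2 ⟨by omega, h1⟩
      · rw [Nat.cast_sub (by omega)]; simp
  exact (mul_right_cancel₀ hpos.ne' h).symm

/-- number of elements of `S` above `d` = number of cells on the diagonal `d` -/
def cc (S : Finset ℕ) (d : ℕ) : ℕ := (S.filter fun s => d < s).card

theorem cc_succ (S : Finset ℕ) (d : ℕ) :
    cc S d = cc S (d + 1) + if d + 1 ∈ S then 1 else 0 := by
  unfold cc
  split_ifs with h
  · have : S.filter (fun s => d < s) = insert (d + 1) (S.filter fun s => d + 1 < s) := by
      ext x
      simp only [Finset.mem_filter, Finset.mem_insert]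
      constructor
      · rintro ⟨h1, h2⟩
        by_cases hx : x = d + 1
        · exact Or.inl hx
        · exact Or.inr ⟨h1, by omega⟩
      · rintro (rfl | ⟨h1, h2⟩)
        · exact ⟨h, by omega⟩
        · exact ⟨h1, by omega⟩
    rw [this, Finset.card_insert_of_notMem (by simp)]
  · rw [add_zero]
    congr 1
    ext x
    simp only [Finset.mem_filter]
    constructor
    · rintro ⟨h1, h2⟩
      have : x ≠ d + 1 := fun hx => h (hx ▸ h1)
      exact ⟨h1, by omega⟩
    · rintro ⟨h1, h2⟩
      exact ⟨h1, by omega⟩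

theorem cc_anti (S : Finset ℕ) {a b : ℕ} (h : a ≤ b) : cc S b ≤ cc S a := by
  unfold cc
  apply Finset.card_le_card
  intro x
  simp only [Finset.mem_filter]
  rintro ⟨h1, h2⟩
  exact ⟨h1, by omega⟩

theorem cc_le_add (S : Finset ℕ) (a k : ℕ) : cc S a ≤ cc S (a + k) + k := by
  induction k with
  | zero => simp
  | succ k ih =>
    have := cc_succ S (a + k)
    show cc S a ≤ cc S (a + k + 1) + (k + 1)
    split_ifs at this <;> omega

theorem cc_le (n : ℕ) (S : Finset ℕ) (hS : S ⊆ Icc 1 n) (d : ℕ) : cc S d ≤ n - d := by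
  unfold cc
  rw [← Nat.card_Ioc]
  apply Finset.card_le_card
  intro x hx
  have := Finset.mem_filter.1 hx
  have h2 := Finset.mem_Icc.1 (hS this.1)
  exact Finset.mem_Ioc.2 ⟨this.2, h2.2⟩

theorem cc_dn (S : Finset ℕ) (s : ℕ) (hs : s ∈ S) (hs0 : s ≠ 0) (hs1 : s - 1 ∉ S) (d : ℕ) :
    cc S d = cc (dn s S) d + if d + 1 = s then 1 else 0 := by
  unfold cc dn
  have h1 : (S.filter fun x => d < x) = if d < s then insert s ((S.erase s).filter fun x => d < x)
      else (S.erase s).filter fun x => d < x := by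
    conv_lhs => rw [← Finset.insert_erase hs, Finset.filter_insert]
  have hns : s ∉ (S.erase s).filter fun x => d < x := by simp
  have hns1 : s - 1 ∉ (S.erase s).filter fun x => d < x := by simp [hs1]
  rw [h1]
  by_cases hs2 : s = 1
  · rw [if_pos hs2]
    by_cases hd : d < s
    · rw [if_pos hd, if_pos (by omega), Finset.card_insert_of_notMem hns]
    · rw [if_neg hd, if_neg (by omega), add_zero]
  · rw [if_neg hs2, Finset.filter_insert]
    by_cases hd : d < s
    · rw [if_pos hd, Finset.card_insert_of_notMem hns]
      by_cases hd' : d + 1 = s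
      · rw [if_pos hd', if_neg (by omega)]
      · rw [if_neg hd', if_pos (by omega), Finset.card_insert_of_notMem hns1, add_zero]
    · rw [if_neg hd, if_neg (by omega), if_neg (by omega), add_zero]

/-- the shifted diagram with set of parts `S` -/
def II (n : ℕ) (S : Finset ℕ) : Finset (ℕ × ℕ) :=
  (Finset.range n ×ˢ Finset.range n).filter fun c => c.1 ≤ c.2 ∧ c.1 < cc S (c.2 - c.1)

theorem mem_II (n : ℕ) (S : Finset ℕ) (hS : S ⊆ Icc 1 n) (c : ℕ × ℕ) :
    c ∈ II n S ↔ c.1 ≤ c.2 ∧ c.1 < cc S (c.2 - c.1) := by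
  unfold II
  simp only [Finset.mem_filter, Finset.mem_product, Finset.mem_range]
  constructor
  · exact fun h => h.2
  · intro h
    have := cc_le n S hS (c.2 - c.1)
    exact ⟨by omega, h⟩

/-- corner cell of the part `s` -/
def kap (S : Finset ℕ) (s : ℕ) : ℕ × ℕ := (cc S s, cc S s + (s - 1))

theorem dn_subset (n : ℕ) (S : Finset ℕ) (hS : S ⊆ Icc 1 n) (s : ℕ) (hs : s ∈ S) :
    dn s S ⊆ Icc 1 n := by
  have h1 := Finset.mem_Icc.1 (hS hs)
  have h2 : S.erase s ⊆ Icc 1 n := (Finset.erase_subset _ _).trans hS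
  unfold dn
  split_ifs with h
  · exact h2
  · exact Finset.insert_subset (Finset.mem_Icc.2 ⟨by omega, by omega⟩) h2

theorem II_erase (n : ℕ) (S : Finset ℕ) (hS : S ⊆ Icc 1 n) (s : ℕ) (hs : s ∈ mv S) :
    (II n S).erase (kap S s) = II n (dn s S) := by
  obtain ⟨hs1, hs2⟩ := Finset.mem_filter.1 hs
  have hs0 := Finset.mem_Icc.1 (hS hs1)
  ext ⟨i, j⟩
  rw [Finset.mem_erase, mem_II n S hS, mem_II n _ (dn_subset n S hS s hs1)]
  have h1 := cc_dn S s hs1 (by omega) hs2 (j - i)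
  have h2 := cc_succ S (s - 1)
  rw [Nat.sub_add_cancel hs0.1, if_pos hs1] at h2
  simp only [kap, ne_eq, Prod.mk.injEq]
  split_ifs at h1 with h
  · have : j - i = s - 1 := by omega
    rw [this] at h1 ⊢
    constructor
    · rintro ⟨h3, h4, h5⟩
      refine ⟨h4, ?_⟩
      omega
    · rintro ⟨h3, h4⟩
      refine ⟨?_, h3, ?_⟩ <;> omega
  · rw [add_zero] at h1
    rw [h1]
    constructor
    · exact fun h3 => h3.2
    · intro h3
      refine ⟨?_, h3⟩
      omega

theorem maxCells_II (n : ℕ) (S : Finset ℕ) (hS : S ⊆ Icc 1 n) :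
    maxCells (II n S) = (mv S).image (kap S) := by
  have h0 : 0 ∉ S := fun h => by have := Finset.mem_Icc.1 (hS h); omega
  ext ⟨i, j⟩
  unfold maxCells
  rw [Finset.mem_filter, Finset.mem_image]
  constructor
  · rintro ⟨hm, hmax⟩
    rw [mem_II n S hS] at hm
    obtain ⟨h1, h2⟩ := hm
    simp only at h1 h2
    have h3 : ¬ i < cc S (j - i + 1) := by
      intro h
      refine hmax (i, j + 1) ((mem_II n S hS _).2 ⟨by simp only; omega, ?_⟩)
        (Or.inl ⟨rfl, by simp⟩)
      have : j + 1 - i = j - i + 1 := by omega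
      simpa [this] using h
    have h4 := cc_succ S (j - i)
    have h5 : j - i + 1 ∈ S := by
      by_contra h
      rw [if_neg h] at h4
      omega
    rw [if_pos h5] at h4
    refine ⟨j - i + 1, Finset.mem_filter.2 ⟨h5, ?_⟩, ?_⟩
    · rw [Nat.add_sub_cancel]
      intro h6
      have h7 : j - i ≠ 0 := fun h => h0 (h ▸ h6)
      have h8 := cc_succ S (j - i - 1)
      rw [Nat.sub_add_cancel (by omega), if_pos h6] at h8
      refine hmax (i + 1, j) ((mem_II n S hS _).2 ⟨by simp only; omega, ?_⟩)
        (Or.inr ⟨rfl, by simp⟩)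
      have : j - (i + 1) = j - i - 1 := by omega
      simp only [this]
      omega
    · simp only [kap, Prod.mk.injEq]
      omega
  · rintro ⟨s, hs, he⟩
    obtain ⟨hs1, hs2⟩ := Finset.mem_filter.1 hs
    have hs0 := Finset.mem_Icc.1 (hS hs1)
    simp only [kap, Prod.mk.injEq] at he
    have hd : j - i = s - 1 := by omega
    have h2 := cc_succ S (s - 1)
    rw [Nat.sub_add_cancel hs0.1, if_pos hs1] at h2
    refine ⟨(mem_II n S hS _).2 ⟨by simp only; omega, by simp only [hd]; omega⟩, ?_⟩
    rintro ⟨i', j'⟩ hm' hlt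
    rw [mem_II n S hS] at hm'
    obtain ⟨h3, h4⟩ := hm'
    simp only at h3 h4
    rcases hlt with ⟨h5, h6⟩ | ⟨h5, h6⟩
    · simp only at h5 h6
      subst h5
      have := cc_anti S (show s ≤ j' - i by omega)
      omega
    · simp only at h5 h6
      subst h5
      have h7 := cc_le_add S (j - i') (i' - i - 1)
      have h8 : j - i' + (i' - i - 1) = s - 1 - 1 := by omega
      have h9 := cc_succ S (s - 1 - 1)
      rw [Nat.sub_add_cancel (by omega), if_neg hs2] at h9
      rw [h8] at h7
      omega

theorem kap_inj (S : Finset ℕ) (h0 : 0 ∉ S) : Set.InjOn (kap S) S := by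
  intro a ha b hb hab
  have : a ≠ 0 := fun h => h0 (h ▸ ha)
  have : b ≠ 0 := fun h => h0 (h ▸ hb)
  simp only [kap, Prod.mk.injEq] at hab
  omega

theorem zero_notMem {n : ℕ} {S : Finset ℕ} (hS : S ⊆ Icc 1 n) : 0 ∉ S :=
  fun h => by have := Finset.mem_Icc.1 (hS h); omega

theorem sum_dn (S : Finset ℕ) (h0 : 0 ∉ S) (s : ℕ) (hs : s ∈ mv S) :
    ∑ i ∈ S, i = ∑ i ∈ dn s S, i + 1 := by
  obtain ⟨hs1, hs2⟩ := Finset.mem_filter.1 hs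
  have : s ≠ 0 := fun h => h0 (h ▸ hs1)
  have h1 := Finset.add_sum_erase S (fun i => i) hs1
  unfold dn
  split_ifs with h
  · omega
  · rw [Finset.sum_insert (by simp [hs2])]
    omega

theorem sytCard_II (n : ℕ) : ∀ (t : ℕ) (S : Finset ℕ), S ⊆ Icc 1 n → ∑ i ∈ S, i = t →
    (sytCard (II n S) : ℚ) = FF S := by
  intro t
  induction t with
  | zero =>
    intro S hS ht
    have : S = ∅ := by
      by_contra h
      obtain ⟨x, hx⟩ := Finset.nonempty_iff_ne_empty.2 h
      have h1 := Finset.mem_Icc.1 (hS hx)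
      have := (Finset.sum_eq_zero_iff.1 ht) x hx
      omega
    subst this
    have : II n ∅ = ∅ := by
      unfold II cc
      simp
    rw [this, sytCard_empty, FF_empty]; simp
  | succ t ih =>
    intro S hS ht
    have hne : S.Nonempty := by
      rw [Finset.nonempty_iff_ne_empty]
      rintro rfl
      simp at ht
    have h0 := zero_notMem hS
    have hII : (II n S).Nonempty := by
      obtain ⟨x, hx⟩ := hne
      have hx1 := Finset.mem_Icc.1 (hS hx)
      refine ⟨(0, 0), (mem_II n S hS _).2 ⟨le_rfl, ?_⟩⟩
      exact Finset.card_pos.2 ⟨x, Finset.mem_filter.2 ⟨hx, by simp only; omega⟩⟩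
    rw [sytCard_rec _ hII, maxCells_II n S hS, Finset.sum_image, FF_rec S h0 hne]
    · push_cast
      apply Finset.sum_congr rfl
      intro s hs
      rw [II_erase n S hS s hs]
      apply ih _ (dn_subset n S hS s (Finset.mem_filter.1 hs).1)
      have := sum_dn S h0 s hs
      omega
    · intro a ha b hb
      exact kap_inj S h0 (Finset.mem_filter.1 ha).1 (Finset.mem_filter.1 hb).1

/-- number of tableaux of the shape with the corner removed -/
def EE (n : ℕ) (V : Finset ℕ) : ℚ := (sytCard ((II n (insert n V)).erase (0, n - 1)) : ℚ)

theorem maxCells_erase (D : Finset (ℕ × ℕ)) (x : ℕ × ℕ)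
    (h : ∀ c ∈ D, cellLt c x → ∃ c' ∈ D, c' ≠ x ∧ cellLt c c') :
    maxCells (D.erase x) = (maxCells D).erase x := by
  ext c
  simp only [maxCells, Finset.mem_filter, Finset.mem_erase]
  constructor
  · rintro ⟨⟨h1, h2⟩, h3⟩
    refine ⟨h1, h2, fun c' hc' hlt => ?_⟩
    by_cases hx : c' = x
    · obtain ⟨c'', h4, h5, h6⟩ := h c h2 (hx ▸ hlt)
      exact h3 c'' ⟨h5, h4⟩ h6
    · exact h3 c' ⟨hx, hc'⟩ hlt
  · rintro ⟨h1, h2, h3⟩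
    exact ⟨⟨h1, h2⟩, fun c' hc' => h3 c' hc'.2⟩

theorem insert_sub {n : ℕ} (hn : 3 ≤ n) {V : Finset ℕ} (hV : V ⊆ Icc 1 (n - 1)) :
    insert n V ⊆ Icc 1 n := by
  apply Finset.insert_subset
  · exact Finset.mem_Icc.2 ⟨by omega, le_rfl⟩
  · exact hV.trans (Finset.Icc_subset_Icc le_rfl (by omega))

theorem dn_insert {n : ℕ} (hn : 3 ≤ n) {V : Finset ℕ} (hV : V ⊆ Icc 1 (n - 1)) (s : ℕ)
    (hs : s ∈ V) : dn s (insert n V) = insert n (dn s V) := by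
  have h1 := Finset.mem_Icc.1 (hV hs)
  unfold dn
  rw [Finset.erase_insert_of_ne (by omega)]
  split_ifs
  · rfl
  · rw [Finset.insert_comm]

theorem cc_top {n : ℕ} {S : Finset ℕ} (hS : S ⊆ Icc 1 n) : cc S n = 0 := by
  have := cc_le n S hS n
  omega

theorem kap_top {n : ℕ} {S : Finset ℕ} (hS : S ⊆ Icc 1 n) : kap S n = (0, n - 1) := by
  simp [kap, cc_top hS]

theorem EE_base {n : ℕ} (hn : 3 ≤ n) {V : Finset ℕ} (hV : V ⊆ Icc 1 (n - 1))
    (h1 : n - 1 ∉ V) : EE n V = FF (insert (n - 1) V) := by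
  unfold EE
  have hS := insert_sub hn hV
  have hnV : n ∉ V := fun h => by have := Finset.mem_Icc.1 (hV h); omega
  rw [← kap_top hS, II_erase n _ hS]
  · have : dn n (insert n V) = insert (n - 1) V := by
      unfold dn
      rw [if_neg (by omega), Finset.erase_insert hnV]
    rw [this]
    refine sytCard_II n _ _ ?_ rfl
    apply Finset.insert_subset
    · exact Finset.mem_Icc.2 ⟨by omega, by omega⟩
    · exact hV.trans (Finset.Icc_subset_Icc le_rfl (by omega))
  · refine Finset.mem_filter.2 ⟨by simp, ?_⟩
    simp only [Finset.mem_insert, not_or]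
    exact ⟨by omega, h1⟩

theorem EE_rec {n : ℕ} (hn : 3 ≤ n) {V : Finset ℕ} (hV : V ⊆ Icc 1 (n - 1))
    (hl : n - 1 ∈ V ∨ n - 2 ∈ V) : EE n V = ∑ s ∈ mv V, EE n (dn s V) := by
  have hS := insert_sub hn hV
  have h0 := zero_notMem hS
  have hnV : n ∉ V := fun h => by have := Finset.mem_Icc.1 (hV h); omega
  have hcc2 : 1 < cc (insert n V) (n - 3) := by
    unfold cc
    rw [Finset.one_lt_card]
    rcases hl with h | h
    · exact ⟨n, by simp; omega, n - 1, by simp [h]; omega, by omega⟩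
    · exact ⟨n, by simp; omega, n - 2, by simp [h]; omega, by omega⟩
  have hcc1 : 0 < cc (insert n V) (n - 2) := by
    unfold cc
    rw [Finset.card_pos]
    exact ⟨n, by simp; omega⟩
  have hm1 : (1, n - 2) ∈ II n (insert n V) := by
    rw [mem_II n _ hS]
    refine ⟨by simp only; omega, ?_⟩
    have : n - 2 - 1 = n - 3 := by omega
    simpa [this] using hcc2
  have hm0 : (0, n - 2) ∈ II n (insert n V) := by
    rw [mem_II n _ hS]
    exact ⟨by simp, by simpa using hcc1⟩
  have hmax : maxCells ((II n (insert n V)).erase (0, n - 1)) =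
      (mv V).image (kap (insert n V)) := by
    rw [maxCells_erase, maxCells_II n _ hS]
    · ext c
      simp only [Finset.mem_erase, Finset.mem_image]
      constructor
      · rintro ⟨h1, s, hs, rfl⟩
        obtain ⟨h2, h3⟩ := Finset.mem_filter.1 hs
        rcases Finset.mem_insert.1 h2 with rfl | h4
        · exact absurd (kap_top hS) h1
        · exact ⟨s, Finset.mem_filter.2 ⟨h4, fun h => h3 (Finset.mem_insert_of_mem h)⟩, rfl⟩
      · rintro ⟨s, hs, rfl⟩
        obtain ⟨h2, h3⟩ := Finset.mem_filter.1 hs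
        have h4 := Finset.mem_Icc.1 (hV h2)
        refine ⟨?_, s, Finset.mem_filter.2 ⟨Finset.mem_insert_of_mem h2, ?_⟩, rfl⟩
        · simp only [kap, ne_eq, Prod.mk.injEq]
          omega
        · simp only [Finset.mem_insert, not_or]
          exact ⟨by omega, h3⟩
    · rintro ⟨i, j⟩ hc hlt
      simp only [cellLt] at hlt
      by_cases hj : j = n - 2
      · exact ⟨(1, n - 2), hm1, by simp, Or.inr ⟨hj, by simp only; omega⟩⟩
      · exact ⟨(0, n - 2), hm0, by simp; omega, Or.inl ⟨by simp only; omega, by simp only; omega⟩⟩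
  unfold EE
  rw [sytCard_rec _ ⟨(0, n - 2), Finset.mem_erase.2 ⟨by simp; omega, hm0⟩⟩, hmax, Finset.sum_image]
  · push_cast
    apply Finset.sum_congr rfl
    intro s hs
    obtain ⟨h2, h3⟩ := Finset.mem_filter.1 hs
    have h4 := Finset.mem_Icc.1 (hV h2)
    rw [Finset.erase_right_comm, II_erase n _ hS, dn_insert hn hV s h2]
    refine Finset.mem_filter.2 ⟨Finset.mem_insert_of_mem h2, ?_⟩
    simp only [Finset.mem_insert, not_or]
    exact ⟨by omega, h3⟩
  · intro a ha b hb
    exact kap_inj _ h0 (Finset.mem_insert_of_mem (Finset.mem_filter.1 ha).1)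
      (Finset.mem_insert_of_mem (Finset.mem_filter.1 hb).1)

theorem cc_full (n d : ℕ) : cc (Icc 1 n) d = n - d := by
  unfold cc
  rw [← Nat.card_Ioc]
  congr 1
  ext x
  simp only [Finset.mem_filter, Finset.mem_Icc, Finset.mem_Ioc]
  omega

theorem EE_full {n : ℕ} (hn : 3 ≤ n) : EE n (Icc 1 (n - 1)) =
    (sytCard ((((Finset.range n) ×ˢ (Finset.range n)).filter
        fun c => c.1 ≤ c.2).erase (0, n - 1)) : ℚ) := by
  unfold EE
  congr 3
  have : insert n (Icc 1 (n - 1)) = Icc 1 n := by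
    ext x
    simp only [Finset.mem_insert, Finset.mem_Icc]
    omega
  rw [this]
  unfold II
  ext c
  simp only [Finset.mem_filter, Finset.mem_product, Finset.mem_range, cc_full]
  omega

theorem mem_dn (s : ℕ) (S : Finset ℕ) (x : ℕ) :
    x ∈ dn s S ↔ (x ≠ s ∧ x ∈ S) ∨ (s ≠ 1 ∧ x = s - 1) := by
  unfold dn
  split_ifs with h
  · simp [h]
  · simp only [Finset.mem_insert, Finset.mem_erase]
    tauto

theorem compl_dn (N : ℕ) (V : Finset ℕ) (hV : V ⊆ Icc 1 N) (s : ℕ) (hs : s ∈ mv V) :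
    s ∈ mv (Icc 1 N \ dn s V) ∧ Icc 1 N \ dn s (Icc 1 N \ dn s V) = V := by
  obtain ⟨h1, h2⟩ := Finset.mem_filter.1 hs
  have h3 := Finset.mem_Icc.1 (hV h1)
  constructor
  · simp only [mv, Finset.mem_filter, Finset.mem_sdiff, mem_dn, Finset.mem_Icc]
    grind
  · ext x
    have h4 : x ∈ V → 1 ≤ x ∧ x ≤ N := fun h => Finset.mem_Icc.1 (hV h)
    simp only [Finset.mem_sdiff, mem_dn, Finset.mem_Icc]
    by_cases hx : x = s
    · subst hx; grind
    · by_cases hx' : x = s - 1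
      · subst hx'; grind
      · grind

theorem exchange (N : ℕ) (Φ : Finset ℕ → Finset ℕ → ℚ) :
    ∑ V ∈ (Icc 1 N).powerset, ∑ s ∈ mv V, Φ (dn s V) V =
    ∑ V ∈ (Icc 1 N).powerset, ∑ s ∈ mv (Icc 1 N \ V), Φ V (Icc 1 N \ dn s (Icc 1 N \ V)) := by
  rw [Finset.sum_sigma', Finset.sum_sigma']
  refine Finset.sum_bij' (fun p _ => ⟨dn p.2 p.1, p.2⟩)
    (fun p _ => ⟨Icc 1 N \ dn p.2 (Icc 1 N \ p.1), p.2⟩) ?_ ?_ ?_ ?_ ?_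
  · rintro ⟨V, s⟩ h
    simp only [Finset.mem_sigma, Finset.mem_powerset] at h ⊢
    exact ⟨dn_subset N V h.1 s (Finset.mem_filter.1 h.2).1, (compl_dn N V h.1 s h.2).1⟩
  · rintro ⟨V, s⟩ h
    simp only [Finset.mem_sigma, Finset.mem_powerset] at h ⊢
    exact ⟨Finset.sdiff_subset, (compl_dn N _ Finset.sdiff_subset s h.2).1⟩
  · rintro ⟨V, s⟩ h
    simp only [Finset.mem_sigma, Finset.mem_powerset] at h ⊢
    rw [(compl_dn N V h.1 s h.2).2]
  · rintro ⟨V, s⟩ h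
    simp only [Finset.mem_sigma, Finset.mem_powerset] at h ⊢
    have h1 := (compl_dn N _ (Finset.sdiff_subset (t := V)) s h.2)
    have h2 := dn_subset N _ (Finset.sdiff_subset (s := Icc 1 N)) s (Finset.mem_filter.1 h1.1).1
    have h3 : dn s (Icc 1 N \ dn s (Icc 1 N \ V)) = V := by
      rw [← Finset.sdiff_sdiff_eq_self h2, h1.2, Finset.sdiff_sdiff_eq_self h.1]
    rw [h3]
  · rintro ⟨V, s⟩ h
    simp only [Finset.mem_sigma, Finset.mem_powerset] at h ⊢
    rw [(compl_dn N V h.1 s h.2).2]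

/-- inner sum of the complement -/
theorem compl_inner_sum (N : ℕ) (V : Finset ℕ) (hV : V ⊆ Icc 1 N) :
    ∑ s ∈ mv (Icc 1 N \ V), FF (Icc 1 N \ (Icc 1 N \ dn s (Icc 1 N \ V))) =
      FF (Icc 1 N \ V) - if V = Icc 1 N then 1 else 0 := by
  have h1 : ∑ s ∈ mv (Icc 1 N \ V), FF (Icc 1 N \ (Icc 1 N \ dn s (Icc 1 N \ V))) =
      ∑ s ∈ mv (Icc 1 N \ V), FF (dn s (Icc 1 N \ V)) := by
    apply Finset.sum_congr rfl
    intro s hs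
    rw [Finset.sdiff_sdiff_eq_self
      (dn_subset N _ Finset.sdiff_subset s (Finset.mem_filter.1 hs).1)]
  rw [h1]
  split_ifs with h
  · subst h
    simp [mv, FF_empty]
  · rw [sub_zero, ← FF_rec _ (zero_notMem (n := N) Finset.sdiff_subset)]
    rw [Finset.sdiff_nonempty]
    intro h2
    exact h (hV.antisymm h2)

/-- weighted convolution -/
def ZZ (N : ℕ) (φ : ℕ → ℚ) : ℚ :=
  ∑ V ∈ (Icc 1 N).powerset, φ (∑ i ∈ V, i) * FF V * FF (Icc 1 N \ V)

theorem ZZ_step (N : ℕ) (φ : ℕ → ℚ) :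
    ZZ N φ = φ 0 * FF (Icc 1 N) + ZZ N (fun t => φ (t + 1)) -
      φ (∑ i ∈ Icc 1 N, i + 1) * FF (Icc 1 N) := by
  have h1 : ZZ N φ = φ 0 * FF (Icc 1 N) + ∑ V ∈ (Icc 1 N).powerset, ∑ s ∈ mv V,
      φ (∑ i ∈ dn s V, i + 1) * FF (dn s V) * FF (Icc 1 N \ V) := by
    unfold ZZ
    have hA : φ 0 * FF (Icc 1 N) = ∑ V ∈ (Icc 1 N).powerset,
        if V = ∅ then φ 0 * FF (Icc 1 N) else 0 := by
      rw [Finset.sum_ite_eq']; simp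
    rw [hA, ← Finset.sum_add_distrib]
    apply Finset.sum_congr rfl
    intro V hV
    rw [Finset.mem_powerset] at hV
    split_ifs with h
    · subst h
      simp [mv, FF_empty]
    · rw [zero_add, FF_rec V (zero_notMem hV) (Finset.nonempty_iff_ne_empty.2 h), Finset.mul_sum,
        Finset.sum_mul]
      apply Finset.sum_congr rfl
      intro s hs
      rw [sum_dn V (zero_notMem hV) s hs]
  rw [h1, exchange N (fun V' V => φ (∑ i ∈ V', i + 1) * FF V' * FF (Icc 1 N \ V))]
  rw [add_sub_assoc]
  congr 1
  have hA : φ (∑ i ∈ Icc 1 N, i + 1) * FF (Icc 1 N) = ∑ V ∈ (Icc 1 N).powerset,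
      if V = Icc 1 N then φ (∑ i ∈ Icc 1 N, i + 1) * FF (Icc 1 N) else 0 := by
    rw [Finset.sum_ite_eq']; simp
  unfold ZZ
  rw [hA, ← Finset.sum_sub_distrib]
  apply Finset.sum_congr rfl
  intro V hV
  rw [Finset.mem_powerset] at hV
  rw [← Finset.mul_sum, compl_inner_sum N V hV]
  split_ifs with h
  · subst h; ring
  · ring

theorem ZZ_ind (N t : ℕ) (ht : t ≤ ∑ i ∈ Icc 1 N, i) :
    ZZ N (fun u => if u = t then 1 else 0) = FF (Icc 1 N) := by
  induction t with
  | zero =>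
    rw [ZZ_step]
    have : ZZ N (fun u => if u + 1 = 0 then 1 else 0) = 0 := by simp [ZZ]
    rw [this]; simp
  | succ t ih =>
    rw [ZZ_step]
    have h1 : ∑ i ∈ Icc 1 N, i + 1 ≠ t + 1 := by omega
    have h2 : ZZ N (fun u => if u + 1 = t + 1 then 1 else 0) = FF (Icc 1 N) := by
      rw [← ih (by omega)]
      simp only [add_left_inj]
    rw [h2, if_neg h1, if_neg (by omega)]
    simp

theorem ZZ_eq (N : ℕ) (φ : ℕ → ℚ) :
    ZZ N φ = (∑ t ∈ range (∑ i ∈ Icc 1 N, i + 1), φ t) * FF (Icc 1 N) := by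
  rw [Finset.sum_mul]
  have h1 : ∀ t ∈ range (∑ i ∈ Icc 1 N, i + 1), φ t * FF (Icc 1 N) =
      φ t * ZZ N (fun u => if u = t then 1 else 0) := by
    intro t ht
    rw [ZZ_ind N t (by have := Finset.mem_range.1 ht; omega)]
  rw [Finset.sum_congr rfl h1]
  unfold ZZ
  simp_rw [Finset.mul_sum]
  rw [Finset.sum_comm]
  apply Finset.sum_congr rfl
  intro V hV
  rw [Finset.mem_powerset] at hV
  rw [Finset.sum_eq_single (s := range _) (∑ i ∈ V, i)]
  · rw [if_pos rfl]; ring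
  · intro t _ hne
    rw [if_neg hne.symm]; simp
  · intro h
    exfalso
    apply h
    rw [Finset.mem_range]
    have := Finset.sum_le_sum_of_subset (f := fun i => i) hV
    omega

/-- `V` still contains the pivot cell. -/
def Leg (n : ℕ) (V : Finset ℕ) : Prop := n - 1 ∈ V ∨ n - 2 ∈ V

theorem EE_total {n : ℕ} (hn : 3 ≤ n) : EE n (Icc 1 (n - 1)) =
    ∑ V ∈ (Icc 1 (n - 1)).powerset, ∑ s ∈ mv V,
      if Leg n V ∧ ¬ Leg n (dn s V) then EE n (dn s V) * FF (Icc 1 (n - 1) \ V) else 0 := by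
  set N := n - 1 with hN
  have h1 : ∑ V ∈ (Icc 1 N).powerset, (if Leg n V then EE n V * FF (Icc 1 N \ V) else 0) =
      ∑ V ∈ (Icc 1 N).powerset, (∑ s ∈ mv V,
        (if Leg n V ∧ ¬ Leg n (dn s V) then EE n (dn s V) * FF (Icc 1 N \ V) else 0)) +
      ∑ V ∈ (Icc 1 N).powerset, ∑ s ∈ mv V,
        (if Leg n (dn s V) then EE n (dn s V) * FF (Icc 1 N \ V) else 0) := by
    rw [← Finset.sum_add_distrib]
    apply Finset.sum_congr rfl
    intro V hV
    rw [Finset.mem_powerset] at hV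
    rw [← Finset.sum_add_distrib]
    have hleg : ∀ s ∈ mv V, Leg n (dn s V) → Leg n V := by
      intro s hs h
      obtain ⟨h1, h2⟩ := Finset.mem_filter.1 hs
      have h3 := Finset.mem_Icc.1 (hV h1)
      simp only [Leg, mem_dn] at h ⊢
      rcases h with (h | h) | (h | h)
      · exact Or.inl h.2
      · exfalso; omega
      · exact Or.inr h.2
      · left
        have : n - 1 = s := by omega
        rw [this]; exact h1
    split_ifs with h
    · rw [EE_rec hn hV h, Finset.sum_mul]
      apply Finset.sum_congr rfl
      intro s hs
      by_cases h' : Leg n (dn s V) <;> simp [h, h']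
    · symm
      apply Finset.sum_eq_zero
      intro s hs
      have : ¬ Leg n (dn s V) := fun h' => h (hleg s hs h')
      simp [h, this]
  have h2 := exchange N (fun V' V => if Leg n V' then EE n V' * FF (Icc 1 N \ V) else 0)
  rw [h2] at h1
  have h3 : ∑ V ∈ (Icc 1 N).powerset, ∑ s ∈ mv (Icc 1 N \ V),
      (if Leg n V then EE n V * FF (Icc 1 N \ (Icc 1 N \ dn s (Icc 1 N \ V))) else 0) =
      ∑ V ∈ (Icc 1 N).powerset, (if Leg n V then EE n V * FF (Icc 1 N \ V) else 0) -
        EE n (Icc 1 N) := by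
    have hA : EE n (Icc 1 N) = ∑ V ∈ (Icc 1 N).powerset,
        if V = Icc 1 N then EE n (Icc 1 N) else 0 := by
      rw [Finset.sum_ite_eq']; simp
    rw [hA, ← Finset.sum_sub_distrib]
    apply Finset.sum_congr rfl
    intro V hV
    rw [Finset.mem_powerset] at hV
    have hi := compl_inner_sum N V hV
    by_cases hl : Leg n V
    · simp only [hl, if_true]
      rw [← Finset.mul_sum, hi]
      split_ifs with h
      · subst h; ring
      · ring
    · have : V ≠ Icc 1 N := by
        rintro rfl
        apply hl
        left
        exact Finset.mem_Icc.2 ⟨by omega, by omega⟩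
      simp [hl, this]
  rw [h3] at h1
  linarith

theorem conv_choose (k M : ℕ) : ∑ t ∈ range (M + 1), ((k + t).choose k * (k + (M - t)).choose k) =
    (2 * k + M + 1).choose (2 * k + 1) := by
  have h := congrArg (PowerSeries.coeff M)
    (pow_add (PowerSeries.mk 1 : PowerSeries ℤ) (k + 1) (k + 1))
  have e : k + 1 + (k + 1) = (2 * k + 1) + 1 := by ring
  rw [e, PowerSeries.coeff_mul, PowerSeries.mk_one_pow_eq_mk_choose_add,
    PowerSeries.mk_one_pow_eq_mk_choose_add, Finset.Nat.sum_antidiagonal_eq_sum_range_succ_mk] at h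
  simp only [PowerSeries.coeff_mk] at h
  have e2 : 2 * k + M + 1 = 2 * k + 1 + M := by ring
  rw [e2]
  exact_mod_cast h.symm

theorem conv_fact (k M : ℕ) : ∑ t ∈ range (M + 1),
    ((k + t).factorial / t.factorial : ℚ) * ((k + (M - t)).factorial / (M - t).factorial) =
    (k.factorial : ℚ) ^ 2 * ((2 * k + M + 1).factorial / ((2 * k + 1).factorial * M.factorial)) := by
  have h : ((2 * k + M + 1).factorial / ((2 * k + 1).factorial * M.factorial) : ℚ) =
      ((2 * k + M + 1).choose (2 * k + 1) : ℕ) := by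
    have : 2 * k + M + 1 = 2 * k + 1 + M := by ring
    rw [this, Nat.cast_add_choose]
  rw [h, ← conv_choose]
  push_cast
  rw [Finset.mul_sum]
  apply Finset.sum_congr rfl
  intro t _
  rw [Nat.cast_add_choose, Nat.cast_add_choose]
  field_simp

theorem prod_pf (a m : ℕ) (h : m < a) : (∏ j ∈ Icc 1 m, pf a j) * ((a - 1 - m).factorial : ℚ) *
    ((a + m).factorial : ℚ) = ((a - 1).factorial : ℚ) * (a.factorial : ℚ) := by
  induction m with
  | zero => simp
  | succ m ih =>
    rw [← ih (by omega), Finset.prod_Icc_succ_top (by omega)]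
    obtain ⟨b, rfl⟩ : ∃ b, a = m + 1 + b + 1 := ⟨a - m - 2, by omega⟩
    have e1 : m + 1 + b + 1 - 1 - (m + 1) = b := by omega
    have e2 : m + 1 + b + 1 - 1 - m = b + 1 := by omega
    have e3 : m + 1 + b + 1 + (m + 1) = (m + 1 + b + 1 + m) + 1 := by omega
    rw [e1, e2, e3, Nat.factorial_succ b, Nat.factorial_succ (m + 1 + b + 1 + m)]
    have e4 : pf (m + 1 + b + 1) (m + 1) = ((b : ℚ) + 1) / (m + 1 + b + 1 + (m + 1)) := by
      unfold pf
      rw [abs_of_nonneg (by push_cast; linarith [(Nat.cast_nonneg b : (0 : ℚ) ≤ b)])]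
      push_cast
      congr 1
      ring
    rw [e4]
    push_cast
    field_simp
    ring

/-- the product in the statement -/
def PP (n : ℕ) : ℚ := ∏ x ∈ ((Finset.range (n + 1)) ×ˢ (Finset.range (n + 1))).filter
            (fun x => x.1 < x.2), ((x.1 + x.2 : ℕ) : ℚ)

theorem PP_eq (n : ℕ) : PP n = ∏ j ∈ range (n + 1), ∏ i ∈ range j, ((i + j : ℕ) : ℚ) := by
  unfold PP
  rw [Finset.prod_sigma']
  refine Finset.prod_bij' (fun x _ => ⟨x.2, x.1⟩) (fun x _ => (x.2, x.1)) ?_ ?_ ?_ ?_ ?_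
  · rintro ⟨i, j⟩ h
    simp only [Finset.mem_filter, Finset.mem_product, Finset.mem_range, Finset.mem_sigma] at h ⊢
    omega
  · rintro ⟨i, j⟩ h
    simp only [Finset.mem_filter, Finset.mem_product, Finset.mem_range, Finset.mem_sigma] at h ⊢
    omega
  · rintro ⟨i, j⟩ h; rfl
  · rintro ⟨i, j⟩ h; rfl
  · rintro ⟨i, j⟩ h; rfl

theorem PP_succ (n : ℕ) : PP (n + 1) * (n.factorial : ℚ) = PP n * ((2 * n + 1).factorial : ℚ) := by
  rw [PP_eq, Finset.prod_range_succ, ← PP_eq, mul_assoc]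
  congr 1
  have h : ∀ r, (∏ i ∈ range r, ((i + (n + 1) : ℕ) : ℚ)) * (n.factorial : ℚ) =
      ((n + r).factorial : ℚ) := by
    intro r
    induction r with
    | zero => simp
    | succ r ih =>
      rw [Finset.prod_range_succ, mul_right_comm, ih, ← add_assoc n r 1, Nat.factorial_succ]
      push_cast
      ring
  rw [h]
  congr 2
  ring

theorem PP_pos (n : ℕ) : 0 < PP n := by
  unfold PP
  apply Finset.prod_pos
  rintro ⟨i, j⟩ h
  have := (Finset.mem_filter.1 h).2
  simp only at this
  have : 0 < i + j := by omega
  exact_mod_cast this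

theorem FF_full (n : ℕ) : FF (Icc 1 n) = ((∑ i ∈ Icc 1 n, i).factorial : ℚ) / PP n := by
  induction n with
  | zero => simp [FF, PP_eq]
  | succ n ih =>
    have h1 : Icc 1 (n + 1) = insert (n + 1) (Icc 1 n) := by
      ext x; simp only [Finset.mem_insert, Finset.mem_Icc]; omega
    have h2 : n + 1 ∉ Icc 1 n := by simp
    rw [h1, FF_insert _ _ h2, ih, Finset.sum_insert h2]
    have h3 := prod_pf (n + 1) n (by omega)
    have h4 := PP_succ n
    have hp1 := PP_pos n
    have hp2 := PP_pos (n + 1)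
    have e1 : n + 1 - 1 - n = 0 := by omega
    have e2 : n + 1 + n = 2 * n + 1 := by ring
    rw [e1, e2, Nat.add_sub_cancel, Nat.factorial_zero, Nat.cast_one, mul_one] at h3
    have e3 : ∏ j ∈ Icc 1 n, pf (n + 1) j =
        (n.factorial : ℚ) * ((n + 1).factorial : ℚ) / ((2 * n + 1).factorial : ℚ) := by
      rw [eq_div_iff (by positivity)]; exact h3
    have e4 : PP (n + 1) = PP n * ((2 * n + 1).factorial : ℚ) / n.factorial := by
      rw [eq_div_iff (by positivity)]; exact h4
    rw [e3, e4]
    field_simp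

theorem sum_Icc_id (n : ℕ) : ∑ i ∈ Icc 1 n, i = (n + 1).choose 2 := by
  induction n with
  | zero => simp
  | succ n ih =>
    rw [Finset.sum_Icc_succ_top (by omega), ih, Nat.choose_succ_succ' (n + 1) 1]
    simp; ring

theorem catalan_fact (c : ℕ) :
    (catalan c : ℚ) = ((2 * c).factorial : ℚ) / (c.factorial * (c + 1).factorial) := by
  have h1 : ((c + 1) * catalan c : ℕ) = (2 * c).choose c := by
    rw [succ_mul_catalan_eq_centralBinom, Nat.centralBinom_eq_two_mul_choose]
  have h2 : ((2 * c).choose c : ℚ) = ((2 * c).factorial : ℚ) / (c.factorial * c.factorial) := by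
    rw [two_mul, Nat.cast_add_choose]
  have h3 : ((c : ℚ) + 1) * catalan c = ((2 * c).factorial : ℚ) / (c.factorial * c.factorial) := by
    rw [← h2]; exact_mod_cast h1
  rw [Nat.factorial_succ]
  push_cast
  rw [eq_div_iff (by positivity)] at h3 ⊢
  rw [← h3]; ring

theorem EE_sum (m : ℕ) : EE (m + 4) (Icc 1 (m + 3)) = ∑ V ∈ (Icc 1 m).powerset,
    FF (insert (m + 3) (insert (m + 1) V)) *
      FF (insert (m + 3) (insert (m + 1) (Icc 1 m \ V))) := by
  have h := EE_total (n := m + 4) (by omega)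
  have e : m + 4 - 1 = m + 3 := by omega
  rw [e] at h
  rw [h, Finset.sum_sigma', ← Finset.sum_filter]
  have key : ∀ V s, V ⊆ Icc 1 (m + 3) → s ∈ mv V → Leg (m + 4) V → ¬ Leg (m + 4) (dn s V) →
      s = m + 2 ∧ m + 2 ∈ V ∧ m + 3 ∉ V ∧ m + 1 ∉ V := by
    intro V s hV hs hl hl'
    obtain ⟨h1, h2⟩ := Finset.mem_filter.1 hs
    have h3 := Finset.mem_Icc.1 (hV h1)
    have e1 : m + 4 - 1 = m + 3 := by omega
    have e2 : m + 4 - 2 = m + 2 := by omega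
    simp only [Leg, mem_dn, e1, e2] at hl hl'
    grind
  refine Finset.sum_bij' (fun p _ => p.1.erase (m + 2)) (fun V _ => ⟨insert (m + 2) V, m + 2⟩)
    ?_ ?_ ?_ ?_ ?_
  · rintro ⟨V, s⟩ h
    simp only [Finset.mem_filter, Finset.mem_sigma, Finset.mem_powerset] at h ⊢
    obtain ⟨⟨hV, hs⟩, hl, hl'⟩ := h
    obtain ⟨k1, k2, k3, k4⟩ := key V s hV hs hl hl'
    intro x hx
    have hx1 := Finset.mem_of_mem_erase hx
    have hx2 := Finset.ne_of_mem_erase hx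
    have hx3 := Finset.mem_Icc.1 (hV hx1)
    have hx4 : x ≠ m + 3 := fun h => k3 (h ▸ hx1)
    have hx5 : x ≠ m + 1 := fun h => k4 (h ▸ hx1)
    exact Finset.mem_Icc.2 ⟨hx3.1, by omega⟩
  · intro V hV
    rw [Finset.mem_powerset] at hV
    have hV' : ∀ x, x ∈ V → 1 ≤ x ∧ x ≤ m := fun x hx => Finset.mem_Icc.1 (hV hx)
    have e1 : m + 4 - 1 = m + 3 := by omega
    have e2 : m + 4 - 2 = m + 2 := by omega
    simp only [Finset.mem_filter, Finset.mem_sigma, Finset.mem_powerset, mv, Leg, mem_dn, e1, e2,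
      Finset.mem_insert]
    refine ⟨⟨?_, by simp, ?_⟩, by simp, ?_⟩
    · apply Finset.insert_subset
      · exact Finset.mem_Icc.2 ⟨by omega, by omega⟩
      · exact hV.trans (Finset.Icc_subset_Icc le_rfl (by omega))
    · have := hV' (m + 2 - 1)
      rintro (h | h)
      · omega
      · have := this h; omega
    · have h1 := hV' (m + 3)
      have h2 := hV' (m + 2)
      rintro ((⟨_, h | h⟩ | h) | (⟨_, h | h⟩ | h))
      · omega
      · have := h1 h; omega
      · omega
      · omega
      · have := h2 h; omega
      · omega
  · rintro ⟨V, s⟩ h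
    simp only [Finset.mem_filter, Finset.mem_sigma, Finset.mem_powerset] at h ⊢
    obtain ⟨⟨hV, hs⟩, hl, hl'⟩ := h
    obtain ⟨k1, k2, k3, k4⟩ := key V s hV hs hl hl'
    rw [Finset.insert_erase k2, k1]
  · intro V hV
    rw [Finset.mem_powerset] at hV
    apply Finset.erase_insert
    intro h
    have := Finset.mem_Icc.1 (hV h)
    omega
  · rintro ⟨V, s⟩ h
    simp only [Finset.mem_filter, Finset.mem_sigma, Finset.mem_powerset] at h ⊢
    obtain ⟨⟨hV, hs⟩, hl, hl'⟩ := h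
    obtain ⟨k1, k2, k3, k4⟩ := key V s hV hs hl hl'
    subst k1
    have e1 : m + 4 - 1 = m + 3 := by omega
    have h1 : dn (m + 2) V = insert (m + 1) (V.erase (m + 2)) := by
      unfold dn
      rw [if_neg (by omega)]; rfl
    have h2 : Icc 1 (m + 3) \ V =
        insert (m + 3) (insert (m + 1) (Icc 1 m \ V.erase (m + 2))) := by
      ext x
      have hx : x ∈ V → 1 ≤ x ∧ x ≤ m + 3 := fun hx => Finset.mem_Icc.1 (hV hx)
      simp only [Finset.mem_sdiff, Finset.mem_insert, Finset.mem_erase, Finset.mem_Icc]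
      grind
    rw [EE_base (by omega), h1, h2, e1]
    · rw [e1]
      exact dn_subset _ _ hV _ k2
    · intro h
      exact hl' (Or.inl h)

theorem FF_two (m : ℕ) (V : Finset ℕ) (hV : V ⊆ Icc 1 m) :
    FF (insert (m + 3) (insert (m + 1) V)) =
      pf (m + 3) (m + 1) / ((m + 3).factorial * (m + 1).factorial) *
      (∏ j ∈ V, pf (m + 3) j * pf (m + 1) j) *
      (((2 * m + 4 + ∑ i ∈ V, i).factorial : ℚ) / (∑ i ∈ V, i).factorial) * FF V := by
  have h1 : m + 1 ∉ V := fun h => by have := Finset.mem_Icc.1 (hV h); omega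
  have h3 : m + 3 ∉ insert (m + 1) V := by
    rw [Finset.mem_insert]
    rintro (h | h)
    · omega
    · have := Finset.mem_Icc.1 (hV h); omega
  rw [FF_insert _ _ h3, FF_insert _ _ h1, Finset.sum_insert h1, Finset.prod_insert h1,
    Finset.prod_mul_distrib]
  have e : m + 3 + (m + 1 + ∑ i ∈ V, i) = 2 * m + 4 + ∑ i ∈ V, i := by ring
  rw [e]
  field_simp

theorem EE_closed (m : ℕ) : EE (m + 4) (Icc 1 (m + 3)) =
    (pf (m + 3) (m + 1) / ((m + 3).factorial * (m + 1).factorial)) ^ 2 *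
    (∏ j ∈ Icc 1 m, pf (m + 3) j * pf (m + 1) j) *
    (((2 * m + 4).factorial : ℚ) ^ 2 * ((4 * m + 9 + (m + 1).choose 2).factorial /
      ((4 * m + 9).factorial * ((m + 1).choose 2).factorial))) *
    FF (Icc 1 m) := by
  rw [EE_sum]
  have h1 := ZZ_eq m (fun t => ((2 * m + 4 + t).factorial / t.factorial : ℚ) *
    ((2 * m + 4 + (∑ i ∈ Icc 1 m, i - t)).factorial / (∑ i ∈ Icc 1 m, i - t).factorial))
  rw [conv_fact] at h1
  have e : 2 * (2 * m + 4) + ∑ i ∈ Icc 1 m, i + 1 = 4 * m + 9 + (m + 1).choose 2 := by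
    rw [sum_Icc_id]; ring
  have e' : 2 * (2 * m + 4) + 1 = 4 * m + 9 := by ring
  rw [e, e', sum_Icc_id] at h1
  rw [mul_assoc, ← h1]
  unfold ZZ
  rw [Finset.mul_sum]
  apply Finset.sum_congr rfl
  intro V hV
  rw [Finset.mem_powerset] at hV
  rw [FF_two m V hV, FF_two m _ Finset.sdiff_subset, ← Finset.prod_sdiff hV]
  have e2 : ∑ i ∈ Icc 1 m \ V, i = (m + 1).choose 2 - ∑ i ∈ V, i := by
    have := Finset.sum_sdiff (f := fun i => i) hV
    rw [sum_Icc_id] at this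
    omega
  rw [e2]
  ring

theorem main4 (m : ℕ) : EE (m + 4) (Icc 1 (m + 3)) =
    (((m + 5).choose 2).factorial : ℚ) / PP (m + 4) * catalan (m + 4) * catalan (m + 2) /
      (2 * catalan (2 * m + 5)) := by
  rw [EE_closed, FF_full, sum_Icc_id, Finset.prod_mul_distrib]
  have p3 : ∏ j ∈ Icc 1 m, pf (m + 3) j = ((m + 2).factorial : ℚ) * (m + 3).factorial /
      (2 * (2 * m + 3).factorial) := by
    have h := prod_pf (m + 3) m (by omega)
    have e1 : m + 3 - 1 - m = 2 := by omega
    have e2 : m + 3 + m = 2 * m + 3 := by ring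
    have e3 : m + 3 - 1 = m + 2 := by omega
    rw [e1, e2, e3] at h
    rw [eq_div_iff (by positivity), ← h]
    simp; ring
  have p1 : ∏ j ∈ Icc 1 m, pf (m + 1) j = (m.factorial : ℚ) * (m + 1).factorial /
      ((2 * m + 1).factorial) := by
    have h := prod_pf (m + 1) m (by omega)
    have e1 : m + 1 - 1 - m = 0 := by omega
    have e2 : m + 1 + m = 2 * m + 1 := by ring
    have e3 : m + 1 - 1 = m := by omega
    rw [e1, e2, e3] at h
    rw [eq_div_iff (by positivity), ← h]
    simp
  have hpf : pf (m + 3) (m + 1) = 1 / ((m : ℚ) + 2) := by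
    unfold pf
    push_cast
    have : (m : ℚ) + 3 - (m + 1) = 2 := by ring
    rw [this, abs_of_pos (by norm_num)]
    field_simp
    ring
  have hP : ∀ r, PP (r + 1) = PP r * ((2 * r + 1).factorial : ℚ) / r.factorial := by
    intro r
    rw [eq_div_iff (by positivity)]; exact PP_succ r
  have hPP : PP (m + 4) = PP m * ((2 * m + 1).factorial : ℚ) / m.factorial *
      (2 * m + 3).factorial / (m + 1).factorial * (2 * m + 5).factorial / (m + 2).factorial *
      (2 * m + 7).factorial / (m + 3).factorial := by
    rw [hP (m + 3), hP (m + 2), hP (m + 1), hP m]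
    have e1 : 2 * (m + 1) + 1 = 2 * m + 3 := by ring
    have e2 : 2 * (m + 2) + 1 = 2 * m + 5 := by ring
    have e3 : 2 * (m + 3) + 1 = 2 * m + 7 := by ring
    rw [e1, e2, e3]
  have hN : (m + 5).choose 2 = (4 * m + 9 + (m + 1).choose 2) + 1 := by
    rw [← sum_Icc_id, ← sum_Icc_id, Finset.sum_Icc_succ_top (by omega),
      Finset.sum_Icc_succ_top (by omega), Finset.sum_Icc_succ_top (by omega),
      Finset.sum_Icc_succ_top (by omega)]
    ring
  have hN2 : (((4 * m + 9 + (m + 1).choose 2) + 1 : ℕ) : ℚ) = (m + 5) * (m + 4) / 2 := by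
    rw [← hN, Nat.cast_choose_two]
    push_cast
    ring
  have hpp := PP_pos m
  rw [p3, p1, hpf, hPP, hN, Nat.factorial_succ (4 * m + 9 + (m + 1).choose 2), Nat.cast_mul, hN2, catalan_fact, catalan_fact,
    catalan_fact]
  have f1 : 2 * (m + 4) = 2 * m + 8 := by ring
  have f2 : 2 * (m + 2) = 2 * m + 4 := by ring
  have f3 : 2 * (2 * m + 5) = 4 * m + 10 := by ring
  rw [f1, f2, f3]
  have g1 : ((m + 1).factorial : ℚ) = (m + 1) * m.factorial := by
    rw [Nat.factorial_succ]; push_cast; ring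
  have g2 : ((m + 2).factorial : ℚ) = (m + 2) * ((m + 1) * m.factorial) := by
    rw [Nat.factorial_succ, Nat.cast_mul, g1]; push_cast; ring
  have g3 : ((m + 3).factorial : ℚ) = (m + 3) * ((m + 2) * ((m + 1) * m.factorial)) := by
    rw [Nat.factorial_succ, Nat.cast_mul, g2]; push_cast; ring
  have g4 : ((m + 4).factorial : ℚ) = (m + 4) * ((m + 3) * ((m + 2) * ((m + 1) * m.factorial))) := by
    rw [Nat.factorial_succ, Nat.cast_mul, g3]; push_cast; ring
  have g5 : ((m + 4 + 1).factorial : ℚ) =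
      (m + 5) * ((m + 4) * ((m + 3) * ((m + 2) * ((m + 1) * m.factorial)))) := by
    rw [Nat.factorial_succ, Nat.cast_mul, g4]; push_cast; ring
  have k5 : ((2 * m + 5).factorial : ℚ) = (2 * m + 5) * (2 * m + 4).factorial := by
    rw [Nat.factorial_succ]; push_cast; ring
  have k6 : ((2 * m + 5 + 1).factorial : ℚ) =
      (2 * m + 6) * ((2 * m + 5) * (2 * m + 4).factorial) := by
    rw [Nat.factorial_succ, Nat.cast_mul, k5]; push_cast; ring
  have k8 : ((2 * m + 8).factorial : ℚ) = (2 * m + 8) * (2 * m + 7).factorial := by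
    rw [Nat.factorial_succ]; push_cast; ring
  have k10 : ((4 * m + 10).factorial : ℚ) = (4 * m + 10) * (4 * m + 9).factorial := by
    rw [Nat.factorial_succ]; push_cast; ring
  have hm2 : m + 2 + 1 = m + 3 := rfl
  rw [hm2, k6, k8, k10, k5, g5, g4, g3, g2, g1]
  field_simp
  ring

theorem main3 : EE 3 (Icc 1 2) = 1 := by
  have m1 : mv (Icc 1 2) = {1} := by
    ext x; simp only [mv, Finset.mem_filter, Finset.mem_Icc, Finset.mem_singleton]; omega
  have d1 : dn 1 (Icc 1 2) = {2} := by
    ext x; simp only [mem_dn, Finset.mem_Icc, Finset.mem_singleton]; omega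
  have m2 : mv {2} = {2} := by
    ext x; simp only [mv, Finset.mem_filter, Finset.mem_singleton]; omega
  have d2 : dn 2 {2} = {1} := by
    ext x; simp only [mem_dn, Finset.mem_singleton]; omega
  have m3 : mv {1} = {1} := by
    ext x; simp only [mv, Finset.mem_filter, Finset.mem_singleton]; omega
  have d3 : dn 1 {1} = ∅ := by
    ext x; simp [mem_dn]
  rw [EE_rec (by omega) (by simp) (by simp), m1, Finset.sum_singleton, d1,
    EE_rec (by omega) (by simp) (by simp), m2, Finset.sum_singleton, d2,
    EE_rec (by omega) (by simp) (by simp), m3, Finset.sum_singleton, d3,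
    EE_base (by omega) (by simp) (by simp)]
  simp [FF]

/-- the number of standard shifted tableaux of the staircase
`δ_n = (n, n-1, ..., 1)` with its upper-right corner box removed equals
`g_n * C_n * C_{n-2} / (2 * C_{2n-3})`. -/
theorem stmt0 (n : ℕ) (hn : 3 ≤ n) :
    (sytCard ((((Finset.range n) ×ˢ (Finset.range n)).filter
        fun c => c.1 ≤ c.2).erase (0, n - 1)) : ℚ) =
      ((Nat.factorial ((n + 1).choose 2) : ℚ) /
          ∏ x ∈ ((Finset.range (n + 1)) ×ˢ (Finset.range (n + 1))).filter
            (fun x => x.1 < x.2), ((x.1 + x.2 : ℕ) : ℚ)) *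
        (catalan n) * (catalan (n - 2)) / (2 * catalan (2 * n - 3)) := by
  rw [← EE_full hn]
  change _ = ((Nat.factorial ((n + 1).choose 2) : ℚ) / PP n) * _ * _ / _
  rcases Nat.lt_or_ge n 4 with h | h
  · obtain rfl : n = 3 := by omega
    have e : PP 3 = 360 := by
      rw [PP_eq]
      simp [Finset.prod_range_succ]
      norm_num
    rw [main3, e]
    have c3 : catalan 3 = 5 := catalan_three
    have c1 : catalan 1 = 1 := catalan_one
    norm_num [c3, c1, Nat.choose, Nat.factorial]
  · obtain ⟨m, rfl⟩ : ∃ m, n = m + 4 := ⟨n - 4, by omega⟩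
    have e1 : m + 4 - 1 = m + 3 := by omega
    have e2 : m + 4 - 2 = m + 2 := by omega
    have e3 : 2 * (m + 4) - 3 = 2 * m + 5 := by omega
    rw [e1, e2, e3]
    exact main4 m
end
end

section
/- The number of standard truncated Young tableaux of shape n^m \ (k^{k-1}, k-1) (an m×n rectangle with a k×k square minus one corner box removed from its upper right corner) equals binom(nm - k^2 + 1, m(n-k)) * binom(k(m+n-2k)+1, kn - k^2)^{-1} * f_{(m^{n-k})} * f_{((m-k)^k)}, where f_λ denotes the number of standard Young tableaux of rectangular shape λ. -/
open Finset
open scoped Classical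

noncomputable section

/-- linear extensions of `r` on `D` (all lemmas use `N = D.card`). -/
def linSet {α : Type} (r : α → α → Prop) (D : Finset α) (N : ℕ) : Finset (D → Fin N) :=
  Finset.univ.filter fun T : D → Fin N => Function.Bijective T ∧ ∀ c c' : D, r c c' → T c < T c'

def lin {α : Type} (r : α → α → Prop) (D : Finset α) : ℕ := (linSet r D D.card).card

/-- maximal elements of `D`. -/
def maxs {α : Type} (r : α → α → Prop) (D : Finset α) : Finset α :=
  D.filter fun c => ∀ c' ∈ D, ¬ r c c'

theorem mem_linSet {α : Type} {r : α → α → Prop} {D : Finset α} {N : ℕ} {T : D → Fin N} :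
    T ∈ linSet r D N ↔ Function.Bijective T ∧ ∀ c c' : D, r c c' → T c < T c' := by
  simp [linSet]

theorem lin_empty {α : Type} (r : α → α → Prop) : lin r (∅ : Finset α) = 1 := by
  unfold lin
  rw [Finset.card_eq_one]
  refine ⟨fun x => absurd x.2 (Finset.notMem_empty _), ?_⟩
  ext T
  simp only [mem_linSet, Finset.mem_singleton]
  constructor
  · intro _
    funext x
    exact absurd x.2 (Finset.notMem_empty _)
  · intro _
    refine ⟨⟨fun x => absurd x.2 (Finset.notMem_empty _), fun y => absurd y.2 (by simp)⟩,
      fun x => absurd x.2 (Finset.notMem_empty _)⟩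

theorem lin_rec_aux {α : Type} [DecidableEq α] (r : α → α → Prop) (D : Finset α) (N : ℕ) (hD : D.card = N + 1)
    (hr : ∀ c, ¬ r c c) (c : α) (hc : c ∈ maxs r D) :
    ((linSet r D (N+1)).filter fun T => T ⟨c, (Finset.mem_filter.1 hc).1⟩ = Fin.last N).card
      = (linSet r (D.erase c) N).card := by
  have hcD : c ∈ D := (Finset.mem_filter.1 hc).1
  have hcm : ∀ c' ∈ D, ¬ r c c' := (Finset.mem_filter.1 hc).2
  have key : ∀ T : D → Fin (N+1), Function.Injective T → T ⟨c, hcD⟩ = Fin.last N →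
      ∀ x : D.erase c, (T ⟨x, Finset.mem_of_mem_erase x.2⟩).val < N := by
    intro T hT h x
    have h1 : T ⟨x, Finset.mem_of_mem_erase x.2⟩ ≠ Fin.last N := by
      intro h2
      rw [← h] at h2
      have := hT h2
      exact (Finset.ne_of_mem_erase x.2) (congrArg Subtype.val this)
    have := Fin.val_lt_last h1
    exact this
  refine Finset.card_bij'
    (fun T hT => fun x => ⟨T ⟨x, Finset.mem_of_mem_erase x.2⟩,
      key T (mem_linSet.1 (Finset.mem_filter.1 hT).1).1.1 (Finset.mem_filter.1 hT).2 x⟩)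
    (fun T _ => fun x => if h : (x : α) = c then Fin.last N else
      (T ⟨x, Finset.mem_erase.2 ⟨h, x.2⟩⟩).castSucc) ?_ ?_ ?_ ?_
  · intro T hT
    rw [Finset.mem_filter, mem_linSet] at hT
    obtain ⟨⟨hb, hm⟩, hl⟩ := hT
    rw [mem_linSet]
    refine ⟨?_, ?_⟩
    · rw [Fintype.bijective_iff_injective_and_card]
      constructor
      · intro x y hxy
        simp only [Fin.mk.injEq] at hxy
        have := hb.1 (Fin.ext hxy)
        exact Subtype.ext (by simpa using this)
      · simp [Finset.card_erase_of_mem hcD, hD]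
    · intro x y hxy
      have := hm ⟨x, Finset.mem_of_mem_erase x.2⟩ ⟨y, Finset.mem_of_mem_erase y.2⟩ hxy
      exact this
  · intro T hT
    rw [mem_linSet] at hT
    obtain ⟨hb, hm⟩ := hT
    rw [Finset.mem_filter, mem_linSet]
    refine ⟨⟨?_, ?_⟩, by simp⟩
    · rw [Fintype.bijective_iff_injective_and_card]
      constructor
      · intro x y hxy
        dsimp only at hxy
        split_ifs at hxy with h1 h2 h2
        · exact Subtype.ext (h1.trans h2.symm)
        · exact absurd hxy.symm (Fin.castSucc_lt_last _).ne
        · exact absurd hxy (Fin.castSucc_lt_last _).ne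
        · have := hb.1 (Fin.castSucc_injective _ hxy)
          exact Subtype.ext (by simpa using this)
      · simp [hD]
    · intro x y hxy
      split_ifs with h1 h2 h2
      · exact absurd (h1 ▸ h2 ▸ hxy) (hr _)
      · exact absurd (h1 ▸ hxy) (hcm _ y.2)
      · exact Fin.castSucc_lt_last _
      · exact Fin.castSucc_lt_castSucc_iff.2 (hm _ _ hxy)
  · intro T hT
    rw [Finset.mem_filter, mem_linSet] at hT
    funext x
    dsimp only
    split_ifs with h
    · rw [← hT.2]; congr 1; exact Subtype.ext h.symm
    · rfl
  · intro T hT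
    funext x
    have h := Finset.ne_of_mem_erase x.2
    simp [h]

theorem lin_rec {α : Type} [DecidableEq α] (r : α → α → Prop) (D : Finset α) (hne : D.Nonempty)
    (hr : ∀ c, ¬ r c c) :
    lin r D = ∑ c ∈ maxs r D, lin r (D.erase c) := by
  obtain ⟨N, hN⟩ : ∃ N, D.card = N + 1 := ⟨D.card - 1, by have := hne.card_pos; omega⟩
  have h1 : lin r D = (linSet r D (N+1)).card := by unfold lin; rw [hN]
  rw [h1]
  have hmap : ∀ T ∈ linSet r D (N+1), ∃ c : D, T c = Fin.last N := by
    intro T hT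
    exact (mem_linSet.1 hT).1.2 _
  have h2 : linSet r D (N+1) = (maxs r D).attach.biUnion fun c =>
      (linSet r D (N+1)).filter fun T => T ⟨c.1, (Finset.mem_filter.1 c.2).1⟩ = Fin.last N := by
    ext T
    simp only [Finset.mem_biUnion, Finset.mem_filter, Finset.mem_attach, true_and]
    constructor
    · intro hT
      obtain ⟨c, hc⟩ := hmap T hT
      refine ⟨⟨c.1, Finset.mem_filter.2 ⟨c.2, ?_⟩⟩, hT, hc⟩
      intro c' hc' hrc
      have := (mem_linSet.1 hT).2 c ⟨c', hc'⟩ hrc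
      rw [hc] at this
      exact absurd this (not_lt.2 (Fin.le_last _))
    · rintro ⟨c, hT, _⟩
      exact hT
  rw [h2, Finset.card_biUnion]
  · rw [← Finset.sum_attach (maxs r D)]
    refine Finset.sum_congr rfl ?_
    intro c _
    rw [lin_rec_aux r D N hN hr c.1 c.2]
    unfold lin
    rw [Finset.card_erase_of_mem (Finset.mem_filter.1 c.2).1, hN]
    rfl
  · intro c _ c' _ hcc
    rw [Function.onFun, Finset.disjoint_left]
    intro T hT hT'
    rw [Finset.mem_filter] at hT hT'
    have := (mem_linSet.1 hT.1).1.1 (hT.2.trans hT'.2.symm)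
    exact hcc (Subtype.ext (by simpa using this))

theorem lin_flip {α : Type} (r : α → α → Prop) (D : Finset α) :
    lin (fun x y => r y x) D = lin r D := by
  unfold lin
  refine Finset.card_bij' (fun T _ x => (T x).rev) (fun T _ x => (T x).rev) ?_ ?_ ?_ ?_
  · intro T hT
    rw [mem_linSet] at hT ⊢
    exact ⟨Fin.rev_bijective.comp hT.1, fun c c' h => Fin.rev_lt_rev.2 (hT.2 c' c h)⟩
  · intro T hT
    rw [mem_linSet] at hT ⊢
    exact ⟨Fin.rev_bijective.comp hT.1, fun c c' h => Fin.rev_lt_rev.2 (hT.2 c' c h)⟩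
  · intro T _; simp
  · intro T _; simp

theorem lin_image {α β : Type} [DecidableEq α] [DecidableEq β] (r : α → α → Prop) (r' : β → β → Prop) (φ : α → β)
    (hr : ∀ c, ¬ r c c) (hr' : ∀ c, ¬ r' c c) :
    ∀ N (D : Finset α), D.card = N → Set.InjOn φ D → (∀ c ∈ D, ∀ c' ∈ D, r' (φ c) (φ c') ↔ r c c') →
    lin r' (D.image φ) = lin r D := by
  intro N
  induction N with
  | zero =>
    intro D hD _ _
    rw [Finset.card_eq_zero] at hD
    subst hD
    simp [lin_empty]
  | succ N ih =>
    intro D hD hφ h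
    have hne : D.Nonempty := Finset.card_pos.1 (by omega)
    rw [lin_rec r' _ (hne.image φ) hr', lin_rec r _ hne hr]
    have : maxs r' (D.image φ) = (maxs r D).image φ := by
      ext y
      simp only [maxs, Finset.mem_filter, Finset.mem_image]
      constructor
      · rintro ⟨⟨c, hc, rfl⟩, h2⟩
        exact ⟨c, ⟨hc, fun c' hc' hh => h2 _ ⟨c', hc', rfl⟩ ((h c hc c' hc').2 hh)⟩, rfl⟩
      · rintro ⟨c, ⟨hc, h2⟩, rfl⟩
        refine ⟨⟨c, hc, rfl⟩, ?_⟩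
        rintro _ ⟨c', hc', rfl⟩ hh
        exact h2 c' hc' ((h c hc c' hc').1 hh)
    have hinj : Set.InjOn φ (maxs r D) := fun x hx y hy hxy =>
      hφ (Finset.mem_filter.1 hx).1 (Finset.mem_filter.1 hy).1 hxy
    rw [this, Finset.sum_image hinj]
    refine Finset.sum_congr rfl ?_
    intro c hc
    have hcD : c ∈ D := (Finset.mem_filter.1 hc).1
    rw [← ih (D.erase c) (by rw [Finset.card_erase_of_mem hcD]; omega)]
    · congr 1
      ext y
      simp only [Finset.mem_erase, Finset.mem_image]
      constructor
      · rintro ⟨h1, x, hx, rfl⟩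
        exact ⟨x, ⟨fun hh => h1 (by rw [hh]), hx⟩, rfl⟩
      · rintro ⟨x, ⟨h1, hx⟩, rfl⟩
        exact ⟨fun hh => h1 (hφ hx hcD hh), x, hx, rfl⟩
    · exact hφ.mono (by exact_mod_cast Finset.erase_subset _ _)
    · intro x hx y hy
      exact h x (Finset.mem_of_mem_erase hx) y (Finset.mem_of_mem_erase hy)

/-- down-closed subsets `I` of `D`. -/
def IsDown {α : Type} (r : α → α → Prop) (D I : Finset α) : Prop :=
  I ⊆ D ∧ ∀ c ∈ I, ∀ c' ∈ D, r c' c → c' ∈ I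

def ideals {α : Type} (r : α → α → Prop) (D : Finset α) : Finset (Finset α) :=
  D.powerset.filter fun I => IsDown r D I

theorem mem_ideals {α : Type} {r : α → α → Prop} {D I : Finset α} :
    I ∈ ideals r D ↔ IsDown r D I := by
  simp only [ideals, Finset.mem_filter, Finset.mem_powerset]
  exact ⟨fun h => h.2, fun h => ⟨h.1, h⟩⟩

/-- Splitting a linear extension at an arbitrary family of times. -/
theorem lin_split {α : Type} [DecidableEq α] (r : α → α → Prop) (hr : ∀ c, ¬ r c c) (t : ℕ) :
    ∀ s (D : Finset α), D.card = t + s →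
    lin r D = ∑ I ∈ (ideals r D).filter (fun I => I.card = t), lin r I * lin r (D \ I) := by
  intro s
  induction s with
  | zero =>
    intro D hD
    have : (ideals r D).filter (fun I => I.card = t) = {D} := by
      ext I
      simp only [Finset.mem_filter, mem_ideals, Finset.mem_singleton]
      constructor
      · rintro ⟨h, h2⟩
        exact Finset.eq_of_subset_of_card_le h.1 (by omega)
      · rintro rfl
        exact ⟨⟨subset_rfl, fun _ _ _ h _ => h⟩, by omega⟩
    rw [this]
    simp [lin_empty]
  | succ s ih =>
    intro D hD
    have hne : D.Nonempty := Finset.card_pos.1 (by omega)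
    rw [lin_rec r D hne hr]
    have e1 : ∀ I ∈ (ideals r D).filter (fun I => I.card = t), lin r I * lin r (D \ I) =
        ∑ c ∈ maxs r (D \ I), lin r I * lin r ((D \ I).erase c) := by
      intro I hI
      rw [Finset.mem_filter, mem_ideals] at hI
      have hne' : (D \ I).Nonempty := by
        apply Finset.card_pos.1
        rw [Finset.card_sdiff_of_subset hI.1.1]; omega
      rw [lin_rec r (D \ I) hne' hr, Finset.mul_sum]
    rw [Finset.sum_congr rfl e1]
    have e2 : ∀ c ∈ maxs r D, lin r (D.erase c) =
        ∑ I ∈ (ideals r (D.erase c)).filter (fun I => I.card = t), lin r I * lin r ((D \ I).erase c) := by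
      intro c hc
      have hcD : c ∈ D := (Finset.mem_filter.1 hc).1
      rw [ih (D.erase c) (by rw [Finset.card_erase_of_mem hcD]; omega)]
      refine Finset.sum_congr rfl ?_
      intro I _
      rw [Finset.erase_sdiff_comm]
    rw [Finset.sum_congr rfl e2]
    refine Finset.sum_comm' ?_
    intro c I
    simp only [Finset.mem_filter, mem_ideals, maxs, IsDown, Finset.mem_sdiff, Finset.mem_erase,
      Finset.subset_iff]
    constructor
    · rintro ⟨⟨hc, hcm⟩, ⟨hI1, hI2⟩, hI3⟩
      refine ⟨⟨⟨hc, fun h => (hI1 h).1 rfl⟩, fun c' hc' => hcm c' hc'.1⟩,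
        ⟨fun x hx => (hI1 hx).2, ?_⟩, hI3⟩
      intro x hx y hy hxy
      refine hI2 x hx y ⟨?_, hy⟩ hxy
      rintro rfl
      exact hcm x (hI1 hx).2 hxy
    · rintro ⟨⟨⟨hc, hcI⟩, hcm⟩, ⟨hI1, hI2⟩, hI3⟩
      refine ⟨⟨hc, ?_⟩, ⟨fun x hx => ⟨?_, hI1 hx⟩, ?_⟩, hI3⟩
      · intro c' hc' hh
        by_cases h : c' ∈ I
        · exact hcI (hI2 c' h c hc hh)
        · exact hcm c' ⟨hc', h⟩ hh
      · rintro rfl; exact hcI hx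
      · intro x hx y hy hxy
        exact hI2 x hx y hy.2 hxy

/-- Splitting a linear extension at a pivot element `p`. -/
theorem lin_pivot {α : Type} [DecidableEq α] (r : α → α → Prop) (hr : ∀ c, ¬ r c c) (p : α) :
    ∀ s (D : Finset α), D.card = s → p ∈ D →
    lin r D = ∑ I ∈ (ideals r D).filter (fun I => p ∉ I ∧ IsDown r D (insert p I)),
      lin r I * lin r (D \ insert p I) := by
  intro s
  induction s with
  | zero =>
    intro D hD hp
    rw [Finset.card_eq_zero] at hD
    subst hD
    simp at hp
  | succ s ih =>
    intro D hD hp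
    rw [lin_rec r D ⟨p, hp⟩ hr]
    have e1 : ∀ I ∈ (ideals r D).filter (fun I => p ∉ I ∧ IsDown r D (insert p I)),
        lin r I * lin r (D \ insert p I) =
        (∑ c ∈ maxs r (D \ insert p I), lin r I * lin r ((D \ insert p I).erase c)) +
          (if I = D.erase p then lin r I else 0) := by
      intro I hI
      rw [Finset.mem_filter, mem_ideals] at hI
      split_ifs with h
      · subst h
        rw [Finset.insert_erase hp]
        simp [lin_empty, maxs]
      · have hne' : (D \ insert p I).Nonempty := by
          rw [Finset.nonempty_iff_ne_empty, ne_eq, Finset.sdiff_eq_empty_iff_subset]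
          intro hs
          apply h
          have : D = insert p I := Finset.Subset.antisymm hs hI.2.2.1
          rw [this, Finset.erase_insert hI.2.1]
        rw [lin_rec r (D \ insert p I) hne' hr, Finset.mul_sum, add_zero]
    rw [Finset.sum_congr rfl e1, Finset.sum_add_distrib]
    have e0 : ∑ I ∈ (ideals r D).filter (fun I => p ∉ I ∧ IsDown r D (insert p I)),
        (if I = D.erase p then lin r I else 0) = if p ∈ maxs r D then lin r (D.erase p) else 0 := by
      rw [Finset.sum_ite_eq']
      refine if_congr ?_ rfl rfl
      rw [Finset.mem_filter, mem_ideals, Finset.insert_erase hp]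
      simp only [Finset.mem_filter, maxs, IsDown, Finset.mem_erase]
      constructor
      · rintro ⟨⟨_, h2⟩, -⟩
        refine ⟨hp, fun c hc hpc => ?_⟩
        by_cases hcp : c = p
        · subst hcp; exact hr _ hpc
        · exact (h2 c ⟨hcp, hc⟩ p hp hpc).1 rfl
      · rintro ⟨_, h2⟩
        refine ⟨⟨Finset.erase_subset _ _, fun c hc c' hc' hcc => ⟨?_, hc'⟩⟩, by simp, subset_rfl, fun _ _ _ h _ => h⟩
        rintro rfl
        exact h2 c hc.2 hcc
    have e2 : ∀ c ∈ (maxs r D).erase p, lin r (D.erase c) =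
        ∑ I ∈ (ideals r (D.erase c)).filter (fun I => p ∉ I ∧ IsDown r (D.erase c) (insert p I)),
          lin r I * lin r ((D \ insert p I).erase c) := by
      intro c hc
      have hcD : c ∈ D := (Finset.mem_filter.1 (Finset.mem_of_mem_erase hc)).1
      rw [ih (D.erase c) (by rw [Finset.card_erase_of_mem hcD]; omega)
        (Finset.mem_erase.2 ⟨(Finset.ne_of_mem_erase hc).symm, hp⟩)]
      refine Finset.sum_congr rfl ?_
      intro I _
      rw [Finset.erase_sdiff_comm]
    have e3 : ∑ c ∈ maxs r D, lin r (D.erase c) = (∑ c ∈ (maxs r D).erase p, lin r (D.erase c)) +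
        if p ∈ maxs r D then lin r (D.erase p) else 0 := by
      split_ifs with h
      · rw [Finset.sum_erase_add _ _ h]
      · rw [Finset.erase_eq_of_notMem h, add_zero]
    rw [e3, e0, Finset.sum_congr rfl e2]
    congr 1
    refine Finset.sum_comm' ?_
    intro c I
    simp only [Finset.mem_filter, mem_ideals, maxs, IsDown, Finset.mem_sdiff, Finset.mem_erase,
      Finset.subset_iff, Finset.mem_insert]
    constructor
    · rintro ⟨⟨hcp, hc, hcm⟩, ⟨hI1, hI2⟩, hpI, hI3, hI4⟩
      refine ⟨⟨⟨hc, fun h => h.elim hcp fun h => (hI1 h).1 rfl⟩, fun c' hc' => hcm c' hc'.1⟩,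
        ⟨fun x hx => (hI1 hx).2, ?_⟩, hpI, fun x hx => (hI3 hx).2, ?_⟩
      · intro x hx y hy hxy
        refine hI2 x hx y ⟨?_, hy⟩ hxy
        rintro rfl
        exact hcm x (hI1 hx).2 hxy
      · intro x hx y hy hxy
        refine hI4 x hx y ⟨?_, hy⟩ hxy
        rintro rfl
        exact hcm x (hI3 hx).2 hxy
    · rintro ⟨⟨⟨hc, hcI⟩, hcm⟩, ⟨hI1, hI2⟩, hpI, hI3, hI4⟩
      push Not at hcI
      refine ⟨⟨hcI.1, hc, ?_⟩, ⟨fun x hx => ⟨?_, hI1 hx⟩, ?_⟩, hpI, fun x hx => ⟨?_, hI3 hx⟩, ?_⟩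
      · intro c' hc' hh
        by_cases h : c' = p ∨ c' ∈ I
        · have := hI4 c' h c hc hh
          tauto
        · exact hcm c' ⟨hc', h⟩ hh
      · rintro rfl; exact hcI.2 hx
      · intro x hx y hy hxy
        exact hI2 x hx y hy.2 hxy
      · rintro rfl; tauto
      · intro x hx y hy hxy
        exact hI4 x hx y hy.2 hxy
/-- Vandermonde determinant. -/
def W {a : ℕ} (v : Fin a → ℚ) : ℚ := (Matrix.vandermonde v).det

theorem W_eq {a : ℕ} (v : Fin a → ℚ) :
    W v = ∑ σ : Equiv.Perm (Fin a), ((Equiv.Perm.sign σ : ℤ) : ℚ) *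
      ∏ i, (descPochhammer ℚ (σ i : ℕ)).eval (v i) := by
  unfold W
  rw [Matrix.det_eval_matrixOfPolynomials_eq_det_vandermonde v (fun j => descPochhammer ℚ j)
    (fun i => descPochhammer_natDegree ℚ i) (fun i => monic_descPochhammer ℚ i)]
  rw [← Matrix.det_transpose, Matrix.det_apply']
  rfl

theorem W_step {a : ℕ} (v : Fin a → ℚ) :
    ∑ i, v i * W (Function.update v i (v i - 1)) = (∑ i, (v i - (i : ℕ))) * W v := by
  have h1 : ∀ i, v i * W (Function.update v i (v i - 1)) =
      ∑ σ : Equiv.Perm (Fin a), ((Equiv.Perm.sign σ : ℤ) : ℚ) *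
      (∏ l, (descPochhammer ℚ (σ l : ℕ)).eval (v l)) * (v i - (σ i : ℕ)) := by
    intro i
    rw [W_eq, Finset.mul_sum]
    refine Finset.sum_congr rfl ?_
    intro σ _
    rw [← Finset.mul_prod_erase _ _ (Finset.mem_univ i),
      ← Finset.mul_prod_erase _ (fun l => (descPochhammer ℚ (σ l : ℕ)).eval (v l)) (Finset.mem_univ i)]
    have h2 : ∏ x ∈ Finset.univ.erase i,
        (descPochhammer ℚ (σ x : ℕ)).eval (Function.update v i (v i - 1) x) =
        ∏ x ∈ Finset.univ.erase i, (descPochhammer ℚ (σ x : ℕ)).eval (v x) := by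
      refine Finset.prod_congr rfl ?_
      intro x hx
      rw [Function.update_of_ne (Finset.ne_of_mem_erase hx)]
    rw [h2, Function.update_self]
    have h3 : v i * (descPochhammer ℚ (σ i : ℕ)).eval (v i - 1) =
        (descPochhammer ℚ (σ i : ℕ)).eval (v i) * (v i - (σ i : ℕ)) := by
      have e1 := congrArg (Polynomial.eval (v i)) (descPochhammer_succ_left ℚ (σ i : ℕ))
      have e2 := congrArg (Polynomial.eval (v i)) (descPochhammer_succ_right ℚ (σ i : ℕ))
      simp only [Polynomial.eval_mul, Polynomial.eval_comp, Polynomial.eval_sub, Polynomial.eval_X,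
        Polynomial.eval_one, Polynomial.eval_natCast] at e1 e2
      rw [← e1, e2]
    linear_combination ((Equiv.Perm.sign σ : ℤ) : ℚ) *
      (∏ x ∈ Finset.univ.erase i, (descPochhammer ℚ (σ x : ℕ)).eval (v x)) * h3
  simp_rw [h1]
  rw [Finset.sum_comm, W_eq, Finset.mul_sum]
  refine Finset.sum_congr rfl ?_
  intro σ _
  rw [← Finset.mul_sum, mul_comm]
  congr 1
  rw [Finset.sum_sub_distrib, Finset.sum_sub_distrib]
  congr 1
  exact Equiv.sum_comp σ (fun i : Fin a => ((i : ℕ) : ℚ))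

/-- the relation on abstract column diagrams. -/
def rF (a : ℕ) (c c' : Fin a × ℕ) : Prop :=
  (c.1 = c'.1 ∧ c.2 < c'.2) ∨ (c.2 = c'.2 ∧ c.1 < c'.1)

def S {a : ℕ} (h : Fin a → ℕ) : Finset (Fin a × ℕ) :=
  Finset.univ.biUnion fun j => (Finset.range (h j)).image (Prod.mk j)

theorem mem_S {a : ℕ} {h : Fin a → ℕ} {c : Fin a × ℕ} : c ∈ S h ↔ c.2 < h c.1 := by
  obtain ⟨j, i⟩ := c
  simp [S]

theorem rF_irrefl (a : ℕ) (c : Fin a × ℕ) : ¬ rF a c c := by simp [rF]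

theorem S_erase {a : ℕ} (h : Fin a → ℕ) (j : Fin a) (hj : 0 < h j) :
    (S h).erase (j, h j - 1) = S (Function.update h j (h j - 1)) := by
  ext ⟨l, i⟩
  rw [Finset.mem_erase, mem_S, mem_S]
  by_cases hl : l = j
  · subst hl
    simp
    omega
  · simp [hl]

theorem lin_S_rec {a : ℕ} (h : Fin a → ℕ) (hne : (S h).Nonempty) :
    lin (rF a) (S h) = ∑ j ∈ Finset.univ.filter (fun j => 0 < h j ∧ ∀ l, j < l → h l < h j),
      lin (rF a) (S (Function.update h j (h j - 1))) := by
  rw [lin_rec _ _ hne (rF_irrefl a)]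
  symm
  refine Finset.sum_bij (fun j _ => (j, h j - 1)) ?_ ?_ ?_ ?_
  · intro j hj
    simp only [Finset.mem_filter, Finset.mem_univ, true_and] at hj
    simp only [maxs, Finset.mem_filter, mem_S]
    refine ⟨by omega, ?_⟩
    rintro ⟨l, i⟩ hl hr
    dsimp only at hl
    rcases hr with ⟨h1, h2⟩ | ⟨h1, h2⟩
    · dsimp only at h1 h2
      subst h1
      omega
    · dsimp only at h1 h2
      have := hj.2 l h2
      omega
  · intro j _ l _ hjl
    exact congrArg Prod.fst hjl
  · rintro ⟨j, i⟩ hc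
    simp only [maxs, Finset.mem_filter, mem_S] at hc
    have hi : i = h j - 1 := by
      by_contra hne
      exact hc.2 (j, h j - 1) (by dsimp only; omega) (Or.inl ⟨rfl, by dsimp only; omega⟩)
    refine ⟨j, ?_, by rw [hi]⟩
    simp only [Finset.mem_filter, Finset.mem_univ, true_and]
    refine ⟨by omega, fun l hl => ?_⟩
    by_contra hlt
    exact hc.2 (l, i) (by dsimp only; omega) (Or.inr ⟨rfl, hl⟩)
  · intro j hj
    simp only [Finset.mem_filter, Finset.mem_univ, true_and] at hj
    rw [← S_erase h j hj.1]

/-- shifted heights. -/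
def xs {a : ℕ} (h : Fin a → ℕ) (j : Fin a) : ℕ := h j + (Fin.rev j : ℕ)

theorem sum_rev (a : ℕ) : ∑ j : Fin a, ((Fin.rev j : ℕ) : ℚ) = ∑ j : Fin a, ((j : ℕ) : ℚ) :=
  Equiv.sum_comp Fin.revPerm (fun i : Fin a => ((i : ℕ) : ℚ))

theorem W_delta_ne {a : ℕ} : W (fun j : Fin a => ((Fin.rev j : ℕ) : ℚ)) ≠ 0 := by
  unfold W
  rw [Matrix.det_vandermonde_ne_zero_iff]
  intro i j h
  have h' : ((Fin.rev i : Fin a) : ℕ) = (Fin.rev j : Fin a) := by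
    dsimp only at h
    exact_mod_cast h
  exact Fin.rev_injective (Fin.ext h')

theorem lin_S_formula {a : ℕ} : ∀ N (h : Fin a → ℕ), Antitone h → ∑ j, h j = N →
    (lin (rF a) (S h) : ℚ) * (∏ j, ((xs h j).factorial : ℚ)) *
      W (fun j : Fin a => ((Fin.rev j : ℕ) : ℚ)) =
    (N.factorial : ℚ) * (∏ j : Fin a, (((Fin.rev j : ℕ)).factorial : ℚ)) *
      W (fun j => (xs h j : ℚ)) := by
  intro N
  induction N with
  | zero =>
    intro h _ hs
    have h0 : ∀ j, h j = 0 := by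
      intro j
      exact (Finset.sum_eq_zero_iff.1 hs) j (Finset.mem_univ j)
    have hS : S h = ∅ := by
      ext c
      simp [mem_S, h0]
    simp [hS, lin_empty, xs, h0]
  | succ N ih =>
    intro h hh hs
    have hne : (S h).Nonempty := by
      by_contra hemp
      rw [Finset.not_nonempty_iff_eq_empty] at hemp
      have : ∑ j, h j = 0 := by
        refine Finset.sum_eq_zero fun j _ => ?_
        by_contra hj
        have : (j, 0) ∈ S h := mem_S.2 (by dsimp only; omega)
        rw [hemp] at this
        simp at this
      omega
    rw [lin_S_rec h hne]
    set d := W (fun j : Fin a => ((Fin.rev j : ℕ) : ℚ)) with hd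
    set P := ∏ j : Fin a, (((Fin.rev j : ℕ)).factorial : ℚ) with hP
    have term : ∀ j ∈ Finset.univ.filter (fun j => 0 < h j ∧ ∀ l, j < l → h l < h j),
        (lin (rF a) (S (Function.update h j (h j - 1))) : ℚ) * (∏ j, ((xs h j).factorial : ℚ)) * d
        = (N.factorial : ℚ) * P * ((xs h j : ℚ) *
          W (Function.update (fun j => (xs h j : ℚ)) j ((xs h j : ℚ) - 1))) := by
      intro j hj
      simp only [Finset.mem_filter, Finset.mem_univ, true_and] at hj
      have hanti : Antitone (Function.update h j (h j - 1)) := by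
        intro p q hpq
        by_cases hp : p = j
        · by_cases hq : q = j
          · rw [hp, hq]
          · rw [hp, Function.update_self, Function.update_of_ne hq]
            have := hj.2 q (lt_of_le_of_ne (hp ▸ hpq) (Ne.symm hq))
            omega
        · by_cases hq : q = j
          · rw [hq, Function.update_self, Function.update_of_ne hp]
            have := hh (hq ▸ hpq)
            omega
          · rw [Function.update_of_ne hp, Function.update_of_ne hq]
            exact hh hpq
      have hsum : ∑ l, Function.update h j (h j - 1) l = N := by
        rw [← Finset.add_sum_erase _ _ (Finset.mem_univ j)] at hs ⊢
        rw [Function.update_self]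
        have : ∑ x ∈ Finset.univ.erase j, Function.update h j (h j - 1) x =
            ∑ x ∈ Finset.univ.erase j, h x :=
          Finset.sum_congr rfl fun x hx => Function.update_of_ne (Finset.ne_of_mem_erase hx) _ _
        omega
      have hi := ih _ hanti hsum
      have hxs : xs (Function.update h j (h j - 1)) = Function.update (xs h) j (xs h j - 1) := by
        funext l
        by_cases hl : l = j
        · subst hl
          simp only [xs, Function.update_self]
          omega
        · simp only [xs, Function.update_of_ne hl]
      have hpos : 0 < xs h j := by unfold xs; omega
      have hW : (fun l => (xs (Function.update h j (h j - 1)) l : ℚ)) =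
          Function.update (fun j => (xs h j : ℚ)) j ((xs h j : ℚ) - 1) := by
        funext l
        rw [hxs]
        by_cases hl : l = j
        · subst hl
          simp only [Function.update_self]
          push_cast [Nat.cast_sub hpos]
          rfl
        · simp only [Function.update_of_ne hl]
      have hprod : ∏ l, ((xs h l).factorial : ℚ) = (xs h j : ℚ) *
          ∏ l, ((xs (Function.update h j (h j - 1)) l).factorial : ℚ) := by
        rw [← Finset.mul_prod_erase _ _ (Finset.mem_univ j),
          ← Finset.mul_prod_erase _ (fun l => ((xs (Function.update h j (h j - 1)) l).factorial : ℚ))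
            (Finset.mem_univ j), hxs]
        rw [Function.update_self, ← mul_assoc]
        congr 1
        · rw [← Nat.mul_factorial_pred hpos.ne']
          push_cast
          rfl
        · refine Finset.prod_congr rfl fun x hx => ?_
          rw [Function.update_of_ne (Finset.ne_of_mem_erase hx)]
      rw [hW] at hi
      rw [hprod]
      linear_combination (xs h j : ℚ) * hi
    have hz : ∀ j ∈ Finset.univ, j ∉ Finset.univ.filter (fun j => 0 < h j ∧ ∀ l, j < l → h l < h j) →
        (N.factorial : ℚ) * P * ((xs h j : ℚ) *
          W (Function.update (fun j => (xs h j : ℚ)) j ((xs h j : ℚ) - 1))) = 0 := by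
      intro j _ hj
      simp only [Finset.mem_filter, Finset.mem_univ, true_and, not_and, not_forall, not_lt] at hj
      by_cases hx : xs h j = 0
      · simp [hx]
      · have hl : ∃ l : Fin a, j < l ∧ h j ≤ h l ∧ (l : ℕ) = j + 1 := by
          by_cases h0 : 0 < h j
          · obtain ⟨l, hjl, hle⟩ := hj h0
            have hlt : (j : ℕ) + 1 < a := by have := l.2; have : (j : ℕ) < l := hjl; omega
            refine ⟨⟨j + 1, hlt⟩, ?_, ?_, rfl⟩
            · rw [Fin.lt_def]; simp
            · exact hle.trans (hh (by rw [Fin.le_def]; have : (j : ℕ) < l := hjl; simp; omega))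
          · have hlt : (j : ℕ) + 1 < a := by
              unfold xs at hx
              rw [Fin.val_rev] at hx
              omega
            refine ⟨⟨j + 1, hlt⟩, ?_, by omega, rfl⟩
            rw [Fin.lt_def]; simp
        obtain ⟨l, hjl, hle, hl1⟩ := hl
        have heq : h l = h j := le_antisymm (hh hjl.le) hle
        have hxl : xs h j = xs h l + 1 := by
          unfold xs
          rw [Fin.val_rev, Fin.val_rev]
          have := l.2
          omega
        have : W (Function.update (fun j => (xs h j : ℚ)) j ((xs h j : ℚ) - 1)) = 0 := by
          unfold W
          rw [Matrix.det_vandermonde_eq_zero_iff]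
          refine ⟨j, l, ?_, hjl.ne⟩
          rw [Function.update_self, Function.update_of_ne hjl.ne', hxl]
          push_cast
          ring
        rw [this]
        ring
    push_cast
    rw [Finset.sum_mul, Finset.sum_mul, Finset.sum_congr rfl term,
      Finset.sum_subset (Finset.filter_subset _ _) hz, ← Finset.mul_sum, W_step]
    have hsum : ∑ i, ((xs h i : ℚ) - (i : ℕ)) = (N : ℚ) + 1 := by
      rw [Finset.sum_sub_distrib, ← sum_rev, ← Finset.sum_sub_distrib]
      have : (∑ j, (h j : ℚ)) = (N : ℚ) + 1 := by exact_mod_cast hs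
      rw [← this]
      refine Finset.sum_congr rfl fun j _ => ?_
      unfold xs
      push_cast
      ring
    rw [hsum, Nat.factorial_succ]
    push_cast
    ring

theorem chu (p q N : ℕ) : ∑ t ∈ Finset.range (N + 1),
    ((p + t).choose p : ℚ) * ((q + (N - t)).choose q : ℚ) = ((p + q + 1 + N).choose N : ℚ) := by
  have h : (PowerSeries.mk 1 : PowerSeries ℚ) ^ (p + 1) * (PowerSeries.mk 1) ^ (q + 1) =
      (PowerSeries.mk 1) ^ ((p + q + 1) + 1) := by
    rw [← pow_add]; congr 1; ring
  have h2 := congrArg (PowerSeries.coeff N) h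
  rw [PowerSeries.mk_one_pow_eq_mk_choose_add, PowerSeries.mk_one_pow_eq_mk_choose_add,
    PowerSeries.mk_one_pow_eq_mk_choose_add, PowerSeries.coeff_mul] at h2
  simp only [PowerSeries.coeff_mk] at h2
  rw [Finset.Nat.sum_antidiagonal_eq_sum_range_succ
    (fun i j => (((p + i).choose p : ℚ)) * ((q + j).choose q : ℚ))] at h2
  rw [h2, Nat.choose_symm_add]
/-- the tableau relation. -/
def rN (c c' : ℕ × ℕ) : Prop := (c.1 = c'.1 ∧ c.2 < c'.2) ∨ (c.2 = c'.2 ∧ c.1 < c'.1)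

theorem rN_irrefl (c : ℕ × ℕ) : ¬ rN c c := by simp [rN]

theorem sytCard_eq (D : Finset (ℕ × ℕ)) : sytCard D = lin rN D := by
  unfold sytCard lin linSet rN
  congr 1
  ext T
  simp only [Finset.mem_filter, Finset.mem_univ, true_and]
  constructor
  · rintro ⟨h1, h2⟩
    refine ⟨h1, fun c c' h => ?_⟩
    rcases h with h | h
    · exact (h2 c c').1 h.1 h.2
    · exact (h2 c c').2 h.1 h.2
  · rintro ⟨h1, h2⟩
    exact ⟨h1, fun c c' => ⟨fun a b => h2 c c' (Or.inl ⟨a, b⟩), fun a b => h2 c c' (Or.inr ⟨a, b⟩)⟩⟩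

theorem mem_iff_lt_card (s : Finset ℕ) (hs : ∀ i ∈ s, ∀ i' < i, i' ∈ s) (i : ℕ) :
    i ∈ s ↔ i < s.card := by
  constructor
  · intro hi
    have : Finset.range (i + 1) ⊆ s := by
      intro x hx
      rw [Finset.mem_range] at hx
      rcases Nat.lt_succ_iff_lt_or_eq.1 hx with h | h
      · exact hs i hi x h
      · exact h ▸ hi
    have := Finset.card_le_card this
    rw [Finset.card_range] at this
    omega
  · intro hi
    by_contra hn
    have : s ⊆ Finset.range i := by
      intro x hx
      rw [Finset.mem_range]
      by_contra hlt
      rcases Nat.lt_or_ge i x with h | h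
      · exact hn (hs x hx i h)
      · have : x = i := by omega
        exact hn (this ▸ hx)
    have := Finset.card_le_card this
    rw [Finset.card_range] at this
    omega

/-- the box with `b` rows and `a` columns. -/
def cbox (a b : ℕ) : Finset (ℕ × ℕ) := Finset.range b ×ˢ Finset.range a

theorem mem_box {a b : ℕ} {c : ℕ × ℕ} : c ∈ cbox a b ↔ c.1 < b ∧ c.2 < a := by
  simp [cbox]

/-- column heights. -/
def hc (a b : ℕ) (ν : Finset (ℕ × ℕ)) (j : Fin a) : ℕ :=
  ((Finset.range b).filter fun i => (i, (j : ℕ)) ∈ ν).card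

/-- complementary row lengths, bottom to top. -/
def hr (a b : ℕ) (ν : Finset (ℕ × ℕ)) (i : Fin b) : ℕ :=
  ((Finset.range a).filter fun q => ((Fin.rev i : ℕ), a - 1 - q) ∉ ν).card

theorem ideal_col {a b : ℕ} {ν : Finset (ℕ × ℕ)} (hν : IsDown rN (cbox a b) ν) {i i' j : ℕ}
    (h : (i, j) ∈ ν) (hi : i' ≤ i) : (i', j) ∈ ν := by
  rcases Nat.lt_or_eq_of_le hi with h1 | h1
  · have hb := mem_box.1 (hν.1 h)
    dsimp only at hb
    exact hν.2 _ h (i', j) (mem_box.2 ⟨by dsimp only; omega, hb.2⟩) (Or.inr ⟨rfl, h1⟩)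
  · exact h1 ▸ h

theorem ideal_row {a b : ℕ} {ν : Finset (ℕ × ℕ)} (hν : IsDown rN (cbox a b) ν) {i j j' : ℕ}
    (h : (i, j) ∈ ν) (hj : j' ≤ j) : (i, j') ∈ ν := by
  rcases Nat.lt_or_eq_of_le hj with h1 | h1
  · have hb := mem_box.1 (hν.1 h)
    dsimp only at hb
    exact hν.2 _ h (i, j') (mem_box.2 ⟨hb.1, by dsimp only; omega⟩) (Or.inl ⟨rfl, h1⟩)
  · exact h1 ▸ h

theorem hc_iff {a b : ℕ} {ν : Finset (ℕ × ℕ)} (hν : IsDown rN (cbox a b) ν) (i : ℕ) (j : Fin a) :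
    (i, (j : ℕ)) ∈ ν ↔ i < hc a b ν j := by
  unfold hc
  rw [← mem_iff_lt_card]
  · simp only [Finset.mem_filter, Finset.mem_range]
    exact ⟨fun h => ⟨(mem_box.1 (hν.1 h)).1, h⟩, fun h => h.2⟩
  · intro i hi i' hlt
    simp only [Finset.mem_filter, Finset.mem_range] at hi ⊢
    exact ⟨by omega, ideal_col hν hi.2 hlt.le⟩

theorem hr_iff {a b : ℕ} {ν : Finset (ℕ × ℕ)} (hν : IsDown rN (cbox a b) ν) (i : Fin b) (q : ℕ) :
    (q < a ∧ ((Fin.rev i : ℕ), a - 1 - q) ∉ ν) ↔ q < hr a b ν i := by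
  unfold hr
  rw [← mem_iff_lt_card]
  · simp only [Finset.mem_filter, Finset.mem_range]
  · intro q hq q' hlt
    simp only [Finset.mem_filter, Finset.mem_range] at hq ⊢
    exact ⟨by omega, fun h => hq.2 (ideal_row hν h (by omega))⟩

theorem hr_le {a b : ℕ} {ν : Finset (ℕ × ℕ)} (hν : IsDown rN (cbox a b) ν) (i : Fin b) :
    hr a b ν i ≤ a := by
  by_contra h
  have := ((hr_iff hν i a).2 (by omega)).1
  omega

theorem hc_le {a b : ℕ} {ν : Finset (ℕ × ℕ)} (hν : IsDown rN (cbox a b) ν) (j : Fin a) :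
    hc a b ν j ≤ b := by
  by_contra h
  have := mem_box.1 (hν.1 ((hc_iff hν b j).2 (by omega)))
  simp at this

theorem hc_anti {a b : ℕ} {ν : Finset (ℕ × ℕ)} (hν : IsDown rN (cbox a b) ν) :
    Antitone (hc a b ν) := by
  intro j j' hj
  by_contra h
  have h1 := (hc_iff hν _ j').2 (not_le.1 h)
  have := (hc_iff hν _ j).1 (ideal_row hν h1 hj)
  omega

theorem hr_anti {a b : ℕ} {ν : Finset (ℕ × ℕ)} (hν : IsDown rN (cbox a b) ν) :
    Antitone (hr a b ν) := by
  intro i i' hi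
  by_contra h
  have h1 := (hr_iff hν i' _).2 (not_le.1 h)
  have := (hr_iff hν i (hr a b ν i)).1 ⟨h1.1, fun h2 => h1.2 (ideal_col hν h2 ?_)⟩
  · omega
  · exact Fin.rev_le_rev.2 hi

/-- beta-set complementarity. -/
theorem prod_beta {a b : ℕ} {ν : Finset (ℕ × ℕ)} (hν : IsDown rN (cbox a b) ν) (g : ℕ → ℚ) :
    (∏ j, g (xs (hc a b ν) j)) * (∏ i, g (xs (hr a b ν) i)) = ∏ s ∈ Finset.range (a + b), g s := by
  set f : Fin a ⊕ Fin b → ℕ := Sum.elim (xs (hc a b ν)) (xs (hr a b ν)) with hf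
  have hlt : ∀ z, f z < a + b := by
    rintro (j | i)
    · have := hc_le hν j
      simp only [hf, Sum.elim_inl, xs, Fin.val_rev]
      omega
    · have := hr_le hν i
      simp only [hf, Sum.elim_inr, xs, Fin.val_rev]
      omega
  have hne : ∀ j i, xs (hc a b ν) j ≠ xs (hr a b ν) i := by
    intro j i
    have hj := j.2
    have hi := i.2
    unfold xs
    rw [Fin.val_rev, Fin.val_rev]
    have e : a - 1 - (a - 1 - (j : ℕ)) = j := by omega
    have ei : ((Fin.rev i : Fin b) : ℕ) = b - (i + 1) := Fin.val_rev i
    by_cases hm : ((Fin.rev i : ℕ), (j : ℕ)) ∈ ν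
    · have h1 := (hc_iff hν _ j).1 hm
      have h2 : ¬ (a - 1 - (j : ℕ)) < hr a b ν i := by
        rw [← hr_iff hν, e]
        tauto
      omega
    · have h1 : ¬ _ := fun h => hm ((hc_iff hν _ j).2 h)
      have h2 : (a - 1 - (j : ℕ)) < hr a b ν i := by
        rw [← hr_iff hν, e]
        exact ⟨by omega, hm⟩
      omega
  have hinj1 : ∀ {p : ℕ} (h : Fin p → ℕ), Antitone h → Function.Injective (xs h) := by
    intro p h hh j j' hjj
    unfold xs at hjj
    rw [Fin.val_rev, Fin.val_rev] at hjj
    have hj := j.2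
    have hj' := j'.2
    rcases le_total j j' with hl | hl
    · have h1 := hh hl
      have h2 : (j : ℕ) ≤ j' := hl
      exact Fin.ext (by omega)
    · have h1 := hh hl
      have h2 : (j' : ℕ) ≤ j := hl
      exact Fin.ext (by omega)
  have hinj : Function.Injective f := by
    rintro (j | i) (j' | i') h
    · exact congrArg Sum.inl (hinj1 _ (hc_anti hν) h)
    · exact absurd h (hne j i')
    · exact absurd h.symm (hne j' i)
    · exact congrArg Sum.inr (hinj1 _ (hr_anti hν) h)
  have himg : Finset.univ.image f = Finset.range (a + b) := by
    apply Finset.eq_of_subset_of_card_le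
    · intro x hx
      rw [Finset.mem_image] at hx
      obtain ⟨z, _, rfl⟩ := hx
      exact Finset.mem_range.2 (hlt z)
    · rw [Finset.card_image_of_injective _ hinj]
      simp
  rw [← himg, Finset.prod_image (fun x _ y _ h => hinj h), Fintype.prod_sum_type]
  rfl

theorem card_S {a : ℕ} (h : Fin a → ℕ) : (S h).card = ∑ j, h j := by
  unfold S
  rw [Finset.card_biUnion]
  · refine Finset.sum_congr rfl fun j _ => ?_
    rw [Finset.card_image_of_injective _ (Prod.mk_right_injective j), Finset.card_range]
  · intro j _ j' _ hj
    rw [Function.onFun, Finset.disjoint_left]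
    rintro ⟨x, y⟩ h1 h2
    simp only [Finset.mem_image, Prod.mk.injEq] at h1 h2
    obtain ⟨_, _, rfl, _⟩ := h1
    obtain ⟨_, _, rfl, _⟩ := h2
    exact hj rfl

/-- lower part. -/
def Ipart (a b k : ℕ) (ν : Finset (ℕ × ℕ)) : Finset (ℕ × ℕ) :=
  (cbox a (k + b)).filter fun c => c.1 < k ∨ (c.1 - k, c.2) ∈ ν

/-- upper part. -/
def Jpart (a b k : ℕ) (ν : Finset (ℕ × ℕ)) : Finset (ℕ × ℕ) :=
  (cbox (a + k) (k + b)).filter fun c => k ≤ c.1 ∧ ¬ (c.1 - k, c.2) ∈ ν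

theorem Ipart_eq {a b : ℕ} {ν : Finset (ℕ × ℕ)} (hν : IsDown rN (cbox a b) ν) (k : ℕ) :
    Ipart a b k ν = (S (fun j => hc a b ν j + k)).image (fun c => (c.2, (c.1 : ℕ))) := by
  ext ⟨i, j⟩
  simp only [Ipart, Finset.mem_filter, mem_box, Finset.mem_image, mem_S, Prod.mk.injEq]
  constructor
  · rintro ⟨⟨h1, h2⟩, h3⟩
    refine ⟨(⟨j, h2⟩, i), ?_, rfl, rfl⟩
    dsimp only
    rcases h3 with h | h
    · omega
    · have := (hc_iff hν (i - k) ⟨j, h2⟩).1 h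
      omega
  · rintro ⟨⟨⟨j', hj'⟩, i'⟩, h, rfl, rfl⟩
    dsimp only at h ⊢
    have := hc_le hν ⟨j', hj'⟩
    refine ⟨⟨by omega, hj'⟩, ?_⟩
    by_cases hk : i' < k
    · exact Or.inl hk
    · exact Or.inr ((hc_iff hν (i' - k) ⟨j', hj'⟩).2 (by omega))

theorem Jpart_eq {a b : ℕ} {ν : Finset (ℕ × ℕ)} (hν : IsDown rN (cbox a b) ν) (k : ℕ) :
    Jpart a b k ν = (S (fun i => hr a b ν i + k)).image
      (fun c => (k + (Fin.rev c.1 : ℕ), a + k - 1 - c.2)) := by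
  ext ⟨i, j⟩
  simp only [Jpart, Finset.mem_filter, mem_box, Finset.mem_image, mem_S, Prod.mk.injEq]
  constructor
  · rintro ⟨⟨h1, h2⟩, h3, h4⟩
    refine ⟨(Fin.rev ⟨i - k, by omega⟩, a + k - 1 - j), ?_, ?_, ?_⟩
    · dsimp only
      by_cases hj : j < a
      · have := (hr_iff hν (Fin.rev ⟨i - k, by omega⟩) (a - 1 - j)).1
          ⟨by omega, by rw [Fin.rev_rev]; dsimp only; rwa [show a - 1 - (a - 1 - j) = j by omega]⟩
        omega
      · omega
    · simp only [Fin.rev_rev]; omega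
    · dsimp only; omega
  · rintro ⟨⟨i', q⟩, h, rfl, rfl⟩
    dsimp only at h ⊢
    have h0 := hr_le hν i'
    have h1 := (Fin.rev i').2
    refine ⟨⟨by omega, by omega⟩, by omega, ?_⟩
    rw [Nat.add_sub_cancel_left]
    intro hm
    have h2 := (mem_box.1 (hν.1 hm)).2
    dsimp only at h2
    have h3 := (hr_iff hν i' (q - k)).2 (by omega)
    exact h3.2 (by rwa [show a - 1 - (q - k) = a + k - 1 - q by omega])

theorem lin_I {a b : ℕ} {ν : Finset (ℕ × ℕ)} (hν : IsDown rN (cbox a b) ν) (k : ℕ) :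
    lin rN (Ipart a b k ν) = lin (rF a) (S (fun j => hc a b ν j + k)) := by
  rw [Ipart_eq hν]
  have := lin_image (rF a) rN (fun c => (c.2, (c.1 : ℕ))) (rF_irrefl a) rN_irrefl _
    (S (fun j => hc a b ν j + k)) rfl ?_ ?_
  · convert this
  · rintro ⟨x, y⟩ _ ⟨x', y'⟩ _ h
    simp only [Prod.mk.injEq] at h ⊢
    exact ⟨Fin.ext h.2, h.1⟩
  · rintro ⟨x, y⟩ _ ⟨x', y'⟩ _
    simp only [rN, rF, Fin.ext_iff, Fin.lt_def]
    tauto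

theorem lin_J {a b : ℕ} {ν : Finset (ℕ × ℕ)} (hν : IsDown rN (cbox a b) ν) (k : ℕ) :
    lin rN (Jpart a b k ν) = lin (rF b) (S (fun j => hr a b ν j + k)) := by
  rw [Jpart_eq hν, ← lin_flip (rF b)]
  have := lin_image (fun x y => rF b y x) rN (fun c => (k + (Fin.rev c.1 : ℕ), a + k - 1 - c.2))
    (rF_irrefl b) rN_irrefl _
    (S (fun j => hr a b ν j + k)) rfl ?_ ?_
  · convert this
  · rintro ⟨x, y⟩ hx ⟨x', y'⟩ hx' h
    rw [Finset.mem_coe, mem_S] at hx hx'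
    dsimp only at hx hx'
    have h1 := hr_le hν x
    have h2 := hr_le hν x'
    simp only [Prod.mk.injEq, Fin.val_rev] at h ⊢
    exact ⟨Fin.ext (by omega), by omega⟩
  · rintro ⟨x, y⟩ hx ⟨x', y'⟩ hx'
    rw [mem_S] at hx hx'
    dsimp only at hx hx'
    have h1 := hr_le hν x
    have h2 := hr_le hν x'
    simp only [rN, rF, Fin.ext_iff, Fin.lt_def, Fin.val_rev]
    omega

theorem sum_hc {a b : ℕ} {ν : Finset (ℕ × ℕ)} (hν : IsDown rN (cbox a b) ν) :
    ∑ j, hc a b ν j = ν.card := by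
  rw [← card_S]
  have h := Ipart_eq hν 0
  have h2 : Ipart a b 0 ν = ν := by
    ext c
    simp only [Ipart, Finset.mem_filter, Nat.not_lt_zero, false_or, Nat.sub_zero, zero_add]
    exact ⟨fun h => h.2, fun h => ⟨hν.1 h, h⟩⟩
  rw [h2] at h
  have h3 := congrArg Finset.card h
  rw [h3, Finset.card_image_of_injOn]
  · rfl
  · rintro ⟨x, y⟩ _ ⟨x', y'⟩ _ h
    simp only [Prod.mk.injEq] at h ⊢
    exact ⟨Fin.ext h.2, h.1⟩

theorem sum_hr {a b : ℕ} {ν : Finset (ℕ × ℕ)} (hν : IsDown rN (cbox a b) ν) :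
    ∑ j, hr a b ν j = a * b - ν.card := by
  rw [← card_S]
  have h := Jpart_eq hν 0
  have h2 : Jpart a b 0 ν = cbox a b \ ν := by
    ext c
    simp [Jpart, Finset.mem_filter]
  rw [h2] at h
  have h3 := congrArg Finset.card h
  rw [Finset.card_sdiff_of_subset hν.1, Finset.card_image_of_injOn] at h3
  · rw [mul_comm a b]
    simpa [cbox] using h3.symm
  · rintro ⟨x, y⟩ hx ⟨x', y'⟩ hx' h
    rw [Finset.mem_coe, mem_S] at hx hx'
    dsimp only at hx hx'
    have h1 := hr_le hν x
    have h2 := hr_le hν x'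
    simp only [Prod.mk.injEq, Fin.val_rev] at h ⊢
    exact ⟨Fin.ext (by omega), by omega⟩

theorem xs_add {a : ℕ} (h : Fin a → ℕ) (k : ℕ) (j : Fin a) :
    xs (fun j => h j + k) j = xs h j + k := by
  simp only [xs]
  omega

theorem W_xs_add {a : ℕ} (h : Fin a → ℕ) (k : ℕ) :
    W (fun j => (xs (fun j => h j + k) j : ℚ)) = W (fun j => (xs h j : ℚ)) := by
  simp only [xs_add, Nat.cast_add]
  exact Matrix.det_vandermonde_add _ _

/-- `C_k`. -/
def Ck (s k : ℕ) : ℚ := ∏ i ∈ Finset.range s, ((i + k).factorial : ℚ)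

theorem Ck_pos (s k : ℕ) : 0 < Ck s k :=
  Finset.prod_pos fun i _ => by exact_mod_cast Nat.factorial_pos _

theorem formula_k {a b : ℕ} {ν : Finset (ℕ × ℕ)} (hν : IsDown rN (cbox a b) ν) (k : ℕ) :
    (lin rN (Ipart a b k ν) : ℚ) * lin rN (Jpart a b k ν) * Ck (a + b) k *
      (W (fun j : Fin a => ((Fin.rev j : ℕ) : ℚ)) * W (fun j : Fin b => ((Fin.rev j : ℕ) : ℚ))) =
    ((a * k + ν.card).factorial : ℚ) * ((b * k + (a * b - ν.card)).factorial : ℚ) *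
     ((∏ j : Fin a, (((Fin.rev j : ℕ)).factorial : ℚ)) * (∏ j : Fin b, (((Fin.rev j : ℕ)).factorial : ℚ))
      * W (fun j => (xs (hc a b ν) j : ℚ)) * W (fun j => (xs (hr a b ν) j : ℚ))) := by
  have h1 := lin_S_formula (a * k + ν.card) (fun j => hc a b ν j + k)
    (fun x y h => Nat.add_le_add_right (hc_anti hν h) k)
    (by rw [Finset.sum_add_distrib, sum_hc hν]; simp; ring)
  have h2 := lin_S_formula (b * k + (a * b - ν.card)) (fun j => hr a b ν j + k)
    (fun x y h => Nat.add_le_add_right (hr_anti hν h) k)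
    (by rw [Finset.sum_add_distrib, sum_hr hν]; simp; ring)
  rw [W_xs_add] at h1 h2
  have h3 := prod_beta hν (fun s => ((s + k).factorial : ℚ))
  simp only [xs_add] at h1 h2
  rw [lin_I hν, lin_J hν]
  unfold Ck
  rw [← h3]
  have := congrArg₂ (· * ·) h1 h2
  linear_combination this

theorem formula_ratio {a b : ℕ} {ν : Finset (ℕ × ℕ)} (hν : IsDown rN (cbox a b) ν) (k : ℕ) :
    (lin rN (Ipart a b k ν) : ℚ) * lin rN (Jpart a b k ν) =
    Ck (a + b) 0 / Ck (a + b) k * ((a * k).factorial * (b * k).factorial) *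
    (((a * k + ν.card).choose (a * k) : ℚ) * ((b * k + (a * b - ν.card)).choose (b * k) : ℚ)) *
    ((lin rN ν : ℚ) * lin rN (cbox a b \ ν)) := by
  have hI : Ipart a b 0 ν = ν := by
    ext c
    simp only [Ipart, Finset.mem_filter, Nat.not_lt_zero, false_or, Nat.sub_zero, zero_add]
    exact ⟨fun h => h.2, fun h => ⟨hν.1 h, h⟩⟩
  have hJ : Jpart a b 0 ν = cbox a b \ ν := by
    ext c
    simp [Jpart, Finset.mem_filter]
  have h0 := formula_k hν 0
  have hk := formula_k hν k
  rw [hI, hJ] at h0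
  simp only [mul_zero, zero_add] at h0
  have wa := @W_delta_ne a
  have wb := @W_delta_ne b
  have c0 := (Ck_pos (a + b) 0).ne'
  have ck := (Ck_pos (a + b) k).ne'
  rw [Nat.cast_add_choose, Nat.cast_add_choose]
  have f1 : ((a * k).factorial : ℚ) ≠ 0 := by exact_mod_cast Nat.factorial_ne_zero _
  have f2 : ((b * k).factorial : ℚ) ≠ 0 := by exact_mod_cast Nat.factorial_ne_zero _
  have f3 : ((ν.card).factorial : ℚ) ≠ 0 := by exact_mod_cast Nat.factorial_ne_zero _
  have f4 : ((a * b - ν.card).factorial : ℚ) ≠ 0 := by exact_mod_cast Nat.factorial_ne_zero _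
  set w1 := W (fun j : Fin a => ((Fin.rev j : ℕ) : ℚ))
  set w2 := W (fun j : Fin b => ((Fin.rev j : ℕ) : ℚ))
  have hw : w1 * w2 ≠ 0 := mul_ne_zero wa wb
  field_simp
  apply mul_right_cancel₀ hw
  linear_combination ((ν.card).factorial : ℚ) * ((a * b - ν.card).factorial : ℚ) * hk -
    ((a * k + ν.card).factorial : ℚ) * ((b * k + (a * b - ν.card)).factorial : ℚ) * h0

theorem sum_ideals (a b k : ℕ) :
    ∑ ν ∈ ideals rN (cbox a b), (lin rN (Ipart a b k ν) : ℚ) * lin rN (Jpart a b k ν) =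
    Ck (a + b) 0 / Ck (a + b) k * ((a * k).factorial * (b * k).factorial) *
      ((a * k + b * k + 1 + a * b).choose (a * b) : ℚ) * lin rN (cbox a b) := by
  rw [Finset.sum_congr rfl (fun ν hν => formula_ratio (mem_ideals.1 hν) k)]
  have hcard : (cbox a b).card = a * b := by simp [cbox, mul_comm]
  have hmaps : ∀ ν ∈ ideals rN (cbox a b), ν.card ∈ Finset.range (a * b + 1) := by
    intro ν hν
    have := Finset.card_le_card (mem_ideals.1 hν).1
    rw [Finset.mem_range]
    omega
  rw [← Finset.sum_fiberwise_of_maps_to hmaps, ← chu, Finset.mul_sum, Finset.sum_mul]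
  refine Finset.sum_congr rfl fun t ht => ?_
  rw [Finset.mem_range] at ht
  rw [lin_split rN rN_irrefl t (a * b - t) (cbox a b) (by omega)]
  push_cast
  rw [Finset.mul_sum]
  refine Finset.sum_congr ?_ fun ν hν => ?_
  · rfl
  · rw [(Finset.mem_filter.1 hν).2]

theorem main_decomp (a b k : ℕ) (hk : 0 < k) :
    lin rN ((cbox (a + k) (k + b)).filter fun c =>
        ¬((c.1 + 1 < k ∧ a ≤ c.2) ∨ (c.1 + 1 = k ∧ a + 1 ≤ c.2))) =
    ∑ ν ∈ ideals rN (cbox a b), lin rN (Ipart a b k ν) * lin rN (Jpart a b k ν) := by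
  set D := (cbox (a + k) (k + b)).filter fun c =>
        ¬((c.1 + 1 < k ∧ a ≤ c.2) ∨ (c.1 + 1 = k ∧ a + 1 ≤ c.2)) with hD
  have mD : ∀ i j, (i, j) ∈ D ↔ i < k + b ∧ j < a + k ∧
      ¬((i + 1 < k ∧ a ≤ j) ∨ (i + 1 = k ∧ a + 1 ≤ j)) := by
    intro i j
    simp only [hD, Finset.mem_filter, mem_box, and_assoc]
  have mI : ∀ ν i j, (i, j) ∈ Ipart a b k ν ↔ i < k + b ∧ j < a ∧ (i < k ∨ (i - k, j) ∈ ν) := by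
    intro ν i j
    simp only [Ipart, Finset.mem_filter, mem_box, and_assoc]
  rw [lin_pivot rN rN_irrefl (k - 1, a) _ D rfl ((mD _ _).2 (by omega))]
  symm
  have hIdown : ∀ ν ∈ ideals rN (cbox a b), Ipart a b k ν ∈ (ideals rN D).filter
      (fun I => (k - 1, a) ∉ I ∧ IsDown rN D (insert (k - 1, a) I)) := by
    intro ν hν
    rw [mem_ideals] at hν
    have hsub : Ipart a b k ν ⊆ D := by
      rintro ⟨i, j⟩ h
      rw [mI] at h
      rw [mD]
      omega
    have hdn : ∀ c ∈ Ipart a b k ν, ∀ c' ∈ D, rN c' c → c' ∈ Ipart a b k ν := by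
      rintro ⟨i, j⟩ h ⟨i', j'⟩ h' hr
      rw [mI] at h ⊢
      rw [mD] at h'
      rcases hr with ⟨h1, h2⟩ | ⟨h1, h2⟩
      · dsimp only at h1 h2
        subst h1
        refine ⟨h.1, by omega, ?_⟩
        rcases h.2.2 with h3 | h3
        · exact Or.inl h3
        · exact Or.inr (ideal_row hν h3 h2.le)
      · dsimp only at h1 h2
        subst h1
        refine ⟨by omega, h.2.1, ?_⟩
        rcases h.2.2 with h3 | h3
        · exact Or.inl (by omega)
        · exact Or.inr (ideal_col hν h3 (by omega))
    rw [Finset.mem_filter, mem_ideals]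
    refine ⟨⟨hsub, hdn⟩, ?_, ?_, ?_⟩
    · rw [mI]; omega
    · intro c hc
      rw [Finset.mem_insert] at hc
      rcases hc with rfl | hc
      · rw [mD]; omega
      · exact hsub hc
    · intro c hc c' hc' hr
      rw [Finset.mem_insert] at hc ⊢
      rcases hc with rfl | hc
      · right
        obtain ⟨i', j'⟩ := c'
        rw [mD] at hc'
        rw [mI]
        simp only [rN] at hr
        omega
      · exact Or.inr (hdn c hc c' hc' hr)
  refine Finset.sum_bij' (fun ν _ => Ipart a b k ν)
    (fun I _ => (cbox a b).filter fun c => (c.1 + k, c.2) ∈ I) hIdown ?_ ?_ ?_ ?_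
  · intro I hI
    rw [Finset.mem_filter, mem_ideals] at hI
    rw [mem_ideals]
    refine ⟨Finset.filter_subset _ _, ?_⟩
    rintro ⟨i, j⟩ h ⟨i', j'⟩ h' hr
    rw [Finset.mem_filter, mem_box] at h
    rw [mem_box] at h'
    rw [Finset.mem_filter, mem_box]
    refine ⟨h', ?_⟩
    dsimp only at h h' ⊢
    refine hI.1.2 _ h.2 _ ((mD _ _).2 (by omega)) ?_
    simp only [rN] at hr ⊢
    omega
  · intro ν hν
    rw [mem_ideals] at hν
    ext ⟨i, j⟩
    rw [Finset.mem_filter, mI, mem_box]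
    dsimp only
    rw [Nat.add_sub_cancel]
    constructor
    · rintro ⟨_, _, _, h | h⟩
      · omega
      · exact h
    · intro h
      have := mem_box.1 (hν.1 h)
      dsimp only at this
      exact ⟨this, by omega, this.2, Or.inr h⟩
  · intro I hI
    rw [Finset.mem_filter, mem_ideals] at hI
    obtain ⟨⟨hI1, hI2⟩, hp, hI3, hI4⟩ := hI
    ext ⟨i, j⟩
    rw [mI, Finset.mem_filter, mem_box]
    dsimp only
    constructor
    · rintro ⟨h1, h2, h3⟩
      by_cases hik : i < k
      · have hq : (k - 1, j) ∈ I := by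
          have := hI4 (k - 1, a) (Finset.mem_insert_self _ _) (k - 1, j)
            ((mD _ _).2 (by omega)) (Or.inl ⟨rfl, h2⟩)
          rw [Finset.mem_insert, Prod.mk.injEq] at this
          rcases this with h | h
          · omega
          · exact h
        by_cases he : i = k - 1
        · rwa [he]
        · exact hI2 _ hq (i, j) ((mD _ _).2 (by omega)) (Or.inr ⟨rfl, by dsimp only; omega⟩)
      · rcases h3 with h3 | h3
        · exact absurd h3 hik
        · rw [Nat.sub_add_cancel (by omega)] at h3
          exact h3.2
    · intro h
      have hd := (mD _ _).1 (hI1 h)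
      have hj : j < a := by
        by_contra hja
        have h1 : (i, a) ∈ I := by
          by_cases he : j = a
          · rwa [← he]
          · exact hI2 _ h (i, a) ((mD _ _).2 (by omega)) (Or.inl ⟨rfl, by dsimp only; omega⟩)
        apply hp
        by_cases he : i = k - 1
        · rwa [← he]
        · exact hI2 _ h1 (k - 1, a) ((mD _ _).2 (by omega)) (Or.inr ⟨rfl, by dsimp only; omega⟩)
      refine ⟨hd.1, hj, ?_⟩
      by_cases hik : i < k
      · exact Or.inl hik
      · right
        rw [Nat.sub_add_cancel (by omega)]
        exact ⟨by omega, h⟩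
  · intro ν hν
    rw [mem_ideals] at hν
    congr 2
    ext ⟨i, j⟩
    simp only [Jpart, Finset.mem_filter, Finset.mem_sdiff, Finset.mem_insert, mem_box, mD, mI,
      Prod.mk.injEq]
    have hb : (i - k, j) ∈ ν → i - k < b ∧ j < a := fun h => mem_box.1 (hν.1 h)
    by_cases hm : (i - k, j) ∈ ν
    · have := hb hm
      simp only [hm, not_true_eq_false, and_true, or_true, and_false, false_iff]
      omega
    · simp only [hm, not_false_eq_true, and_true, or_false]
      omega

/-- superfactorial. -/
def sf (s : ℕ) : ℚ := ∏ i ∈ Finset.range s, (i.factorial : ℚ)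

theorem sf_pos (s : ℕ) : 0 < sf s :=
  Finset.prod_pos fun i _ => by exact_mod_cast Nat.factorial_pos _

theorem Ck_sf (s k : ℕ) : sf k * Ck s k = sf (s + k) := by
  unfold sf Ck
  rw [add_comm s k, Finset.prod_range_add]
  simp only [add_comm]

theorem rect (p q : ℕ) : (lin rN (Finset.range q ×ˢ Finset.range p) : ℚ) * sf (p + q) =
    ((p * q).factorial : ℚ) * sf p * sf q := by
  have hν : IsDown rN (cbox p 0) ∅ := ⟨by simp, by simp⟩
  have h0 : Ipart p 0 q ∅ = Finset.range q ×ˢ Finset.range p := by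
    ext ⟨i, j⟩
    simp [Ipart, mem_box]
    tauto
  have h := formula_k hν q
  have hJ : Jpart p 0 q ∅ = ∅ := by
    ext ⟨i, j⟩
    simp [Jpart, mem_box]
    omega
  have hc0 : ∀ j, hc p 0 ∅ j = 0 := by intro j; simp [hc]
  rw [h0, hJ, lin_empty] at h
  have w1 : W (fun j => (xs (hc p 0 ∅) j : ℚ)) = W (fun j : Fin p => ((Fin.rev j : ℕ) : ℚ)) := by
    simp [xs, hc0]
  have w2 : ∀ v : Fin 0 → ℚ, W v = 1 := by intro v; simp [W]
  have w3 : ∏ j : Fin p, (((Fin.rev j : ℕ)).factorial : ℚ) = sf p := by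
    unfold sf
    rw [← Fin.prod_univ_eq_prod_range]
    exact Equiv.prod_comp Fin.revPerm (fun i : Fin p => ((i : ℕ).factorial : ℚ))
  rw [w1, w2, w2, w3] at h
  have hne := @W_delta_ne p
  have hsf := Ck_sf p q
  simp only [Nat.cast_one, mul_one, Finset.univ_eq_empty, Finset.prod_empty, add_zero,
    Finset.card_empty, zero_mul, mul_zero, Nat.sub_zero, Nat.factorial_zero] at h
  rw [← hsf]
  apply mul_right_cancel₀ hne
  linear_combination sf q * h
/-- the number of standard tableaux of the truncated shape
`n^m \ (k^{k-1}, k-1)` (an `m×n` rectangle with a `k×k` square minus a corner box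
removed from its upper right corner) equals
`binom(nm-k²+1, m(n-k)) · binom(k(m+n-2k)+1, kn-k²)⁻¹ · f_{(m^{n-k})} · f_{((m-k)^k)}`. -/
theorem stmt10 (n m k : ℕ) (hk : 0 < k) (hn : 2 * k - 1 ≤ n) (hnm : n ≤ m) :
    (sytCard (((Finset.range m) ×ˢ (Finset.range n)).filter fun c =>
        ¬((c.1 + 1 < k ∧ n - k ≤ c.2) ∨ (c.1 + 1 = k ∧ n - k + 1 ≤ c.2))) : ℚ) =
      ((n * m - k ^ 2 + 1).choose (m * (n - k)) : ℚ) *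
        ((k * (m + n - 2 * k) + 1).choose (k * n - k ^ 2) : ℚ)⁻¹ *
        (sytCard ((Finset.range (n - k)) ×ˢ (Finset.range m)) : ℚ) *
        (sytCard ((Finset.range k) ×ˢ (Finset.range (m - k))) : ℚ) := by
  obtain ⟨a, rfl⟩ : ∃ a, n = a + k := ⟨n - k, by omega⟩
  obtain ⟨b, rfl⟩ : ∃ b, m = k + b := ⟨m - k, by omega⟩
  rw [sytCard_eq, sytCard_eq, sytCard_eq]
  simp only [Nat.add_sub_cancel, Nat.add_sub_cancel_left]
  have h1 := main_decomp a b k hk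
  have h2 := sum_ideals a b k
  have e1 : (a + k) * (k + b) - k ^ 2 + 1 = a * k + b * k + 1 + a * b := by
    have : (a + k) * (k + b) = (a * k + b * k + a * b) + k ^ 2 := by ring
    rw [this, Nat.add_sub_cancel]; ring
  have e2 : k * (k + b + (a + k) - 2 * k) + 1 = k * a + (k * b + 1) := by
    have : k + b + (a + k) - 2 * k = a + b := by omega
    rw [this]; ring
  have e3 : k * (a + k) - k ^ 2 = k * a := by
    have : k * (a + k) = k * a + k ^ 2 := by ring
    rw [this, Nat.add_sub_cancel]
  have hD : (lin rN (((Finset.range (k + b)) ×ˢ (Finset.range (a + k))).filter fun c =>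
        ¬((c.1 + 1 < k ∧ a ≤ c.2) ∨ (c.1 + 1 = k ∧ a + 1 ≤ c.2))) : ℚ) =
      Ck (a + b) 0 / Ck (a + b) k * ((a * k).factorial * (b * k).factorial) *
      ((a * k + b * k + 1 + a * b).choose (a * b) : ℚ) * lin rN (cbox a b) := by
    rw [← h2]
    exact_mod_cast h1
  rw [hD, e1, e2, e3]
  have r1 := rect (k + b) a
  have r2 := rect b k
  have r3 := rect a b
  have c0 := Ck_sf (a + b) 0
  have ck := Ck_sf (a + b) k
  have p1 := (sf_pos a).ne'
  have p2 := (sf_pos b).ne'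
  have p3 := (sf_pos k).ne'
  have p4 := (sf_pos (a + b)).ne'
  have p5 := (sf_pos (a + b + k)).ne'
  have p6 := (sf_pos (b + k)).ne'
  have s0 : sf 0 = 1 := by simp [sf]
  rw [s0, one_mul, add_zero] at c0
  have ck' : Ck (a + b) k = sf (a + b + k) / sf k := by
    rw [← ck]; field_simp
  rw [show k + b + a = a + b + k by ring, show k + b = b + k by ring] at r1
  rw [show k + b = b + k by ring]
  have r1' := eq_div_of_mul_eq p5 r1
  have r2' := eq_div_of_mul_eq p6 r2
  have r3' := eq_div_of_mul_eq p4 r3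
  have r3'' : (lin rN (cbox a b) : ℚ) = _ := r3'
  rw [r1', r2', r3'', c0, ck']
  have q1 : ((a * k + b * k + 1 + a * b).choose (a * b) : ℚ) =
      ((a * k + b * k + 1 + a * b).factorial : ℚ) /
        ((a * b).factorial * (a * k + b * k + 1).factorial) := by
    rw [add_comm (a * k + b * k + 1) (a * b), Nat.cast_add_choose]
  have q2 : ((a * k + b * k + 1 + a * b).choose ((b + k) * a) : ℚ) =
      ((a * k + b * k + 1 + a * b).factorial : ℚ) /
        (((b + k) * a).factorial * (b * k + 1).factorial) := by
    rw [show a * k + b * k + 1 + a * b = (b + k) * a + (b * k + 1) by ring, Nat.cast_add_choose]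
  have q3 : ((k * a + (k * b + 1)).choose (k * a) : ℚ) =
      ((a * k + b * k + 1).factorial : ℚ) / ((a * k).factorial * (b * k + 1).factorial) := by
    rw [Nat.cast_add_choose, mul_comm k a, mul_comm k b, ← add_assoc]
  rw [q1, q2, q3]
  have ff : ∀ x : ℕ, (x.factorial : ℚ) ≠ 0 := fun x => by exact_mod_cast Nat.factorial_ne_zero x
  have f1 := ff (a * b)
  have f2 := ff (a * k + b * k + 1)
  have f3 := ff ((b + k) * a)
  have f4 := ff (b * k + 1)
  have f5 := ff (a * k)
  field_simp
end
end
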